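/- For each fixed n ≥ 0, the sequence m ↦ β_{3(2m+1)2ⁿ} (m ∈ ℕ, m ≥ 1) is strictly decreasing and converges, as m → ∞, to the base β̂_n ∈ (1,2] whose quasi-greedy expansion of 1 is t_{n+2}⁺ (Θ(t_{n+2}))^∞. -/

import Mathlib

open Filter Set

noncomputable section

namespace FatSierpinski

/-- The digit set Ω = {(0,0),(1,0),(0,1)} ⊆ ℝ². -/
def OmegaR : Set (ℝ × ℝ) := {(0, 0), (1, 0), (0, 1)}

/-- The fat Sierpinski gasket `S_β` (sequences are 0-indexed: `d i` is the digit d_{i+1}). -/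
def Sfat (β : ℝ) : Set (ℝ × ℝ) :=
  {x | ∃ d : ℕ → ℝ × ℝ, (∀ i, d i ∈ OmegaR) ∧ x = ∑' i : ℕ, (β ^ (i + 1))⁻¹ • d i}

/-- The convex hull `Δ_β` of `S_β`. -/
def Delta (β : ℝ) : Set (ℝ × ℝ) := convexHull ℝ (Sfat β)

/-- The map `f_d(x) = (x + d)/β`. -/
def fmap (β : ℝ) (d : ℝ × ℝ) (x : ℝ × ℝ) : ℝ × ℝ := β⁻¹ • (x + d)

/-- The overlap region `O_β = ⋃_{c ≠ d ∈ Ω} f_c(Δ_β) ∩ f_d(Δ_β)`. -/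
def Ofat (β : ℝ) : Set (ℝ × ℝ) :=
  ⋃ c ∈ OmegaR, ⋃ d ∈ OmegaR, ⋃ (_ : c ≠ d), (fmap β c '' Delta β) ∩ (fmap β d '' Delta β)

/-- The univoque set of codings `𝐔_β`. -/
def Ufat (β : ℝ) : Set (ℕ → ℝ × ℝ) :=
  {d | (∀ i, d i ∈ OmegaR) ∧
    ∀ n : ℕ, (∑' i : ℕ, (β ^ (i + 1))⁻¹ • d (n + i)) ∉ Ofat β}

/-- `d` has smallest period `k`. -/
def SmallestPeriod {α : Type*} (d : ℕ → α) (k : ℕ) : Prop :=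
  0 < k ∧ (∀ i, d (i + k) = d i) ∧ ∀ j, 0 < j → j < k → ∃ i, d (i + j) ≠ d i

/-- The critical base `β_k`. -/
def betaK (k : ℕ) : ℝ :=
  sInf {β : ℝ | β ∈ Set.Ioc (1 : ℝ) 2 ∧ ∃ d ∈ Ufat β, SmallestPeriod d k}

/-- Strict lexicographic order on sequences. -/
def seqLT {α : Type*} [Preorder α] (a b : ℕ → α) : Prop :=
  ∃ n, (∀ i < n, a i = b i) ∧ a n < b n

/-- Weak lexicographic order on sequences. -/
def seqLE {α : Type*} [Preorder α] (a b : ℕ → α) : Prop :=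
  seqLT a b ∨ a = b

/-- `a` is a 0-1 sequence. -/
def IsBinary (a : ℕ → ℕ) : Prop := ∀ i, a i ≤ 1

/-- `a` does not end with `0^∞`. -/
def NotEndInZeros (a : ℕ → ℕ) : Prop := ∀ N, ∃ i, N ≤ i ∧ a i ≠ 0

/-- `∑_{i=1}^∞ a_i β^{-i} = 1` (0-indexed: `a i` is a_{i+1}). -/
def SumsToOne (β : ℝ) (a : ℕ → ℕ) : Prop :=
  ∑' i : ℕ, (a i : ℝ) / β ^ (i + 1) = 1

/-- `a` is the quasi-greedy β-expansion of 1: the lexicographically largest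
binary sequence not ending in `0^∞` whose value in base β is 1. -/
def IsQuasiGreedy (β : ℝ) (a : ℕ → ℕ) : Prop :=
  IsBinary a ∧ NotEndInZeros a ∧ SumsToOne β a ∧
    ∀ b : ℕ → ℕ, IsBinary b → NotEndInZeros b → SumsToOne β b → seqLE b a

/-- `w⁺`: replace the final digit 0 of a block by 1. -/
def plusBlock (w : List ℕ) : List ℕ := w.dropLast ++ [1]

/-- `Θ` flips the outer digits of every consecutive triple
(000↦101, 001↦100, 100↦001, 101↦000). -/
def thetaBlock (w : List ℕ) : List ℕ :=
  w.mapIdx fun i x => if i % 3 = 1 then x else 1 - x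

/-- `tB n` is the block `t_{n+1}`: `t_1 = 100`, `t_{n+1} = t_n⁺ Θ(t_n⁺)`. -/
def tB : ℕ → List ℕ
  | 0 => [1, 0, 0]
  | n + 1 => plusBlock (tB n) ++ thetaBlock (plusBlock (tB n))

/-- The sequence `u w^∞` (the block `u` followed by `w` repeated forever). -/
def prefixPeriodic (u w : List ℕ) : ℕ → ℕ := fun i =>
  if i < u.length then u.getD i 0 else w.getD ((i - u.length) % w.length) 0

/-- The periodic sequence `w^∞`. -/
def periodicSeq (w : List ℕ) : ℕ → ℕ := fun i => w.getD (i % w.length) 0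

/-- The componentwise limit `λ = 101001000101…` of the blocks `t_n`
(the digit `λ_{i+1}` has stabilized in `t_{i+2} = tB (i+1)`). -/
def lamSeq : ℕ → ℕ := fun i => (tB (i + 1)).getD i 0

/-- `β_c` is the unique base in (1,2] with `∑ λ_i β^{-i} = 1`. -/
def IsBetaC (β : ℝ) : Prop := β ∈ Set.Ioc (1 : ℝ) 2 ∧ SumsToOne β lamSeq

/-- The sequence `t_{n+2}⁺ (Θ(t_{n+2}))^∞`, the quasi-greedy expansion of 1 for `β̂_n`. -/
def hatSeq (n : ℕ) : ℕ → ℕ :=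
  prefixPeriodic (plusBlock (tB (n + 1))) (thetaBlock (tB (n + 1)))

/-- The Sharkovskii ordering `k ⊳ ℓ` on positive integers. -/
def Sharkovskii (k l : ℕ) : Prop :=
  ∃ a b c d : ℕ, k = 2 ^ a * (2 * b + 1) ∧ l = 2 ^ c * (2 * d + 1) ∧ k ≠ l ∧
    ((1 ≤ b ∧ d = 0) ∨ (1 ≤ b ∧ 1 ≤ d ∧ (a < c ∨ (a = c ∧ b < d))) ∨
      (b = 0 ∧ d = 0 ∧ c < a))

/-- The digit set Ω as pairs of naturals (for combinatorial statements). -/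
def OmegaD : Set (ℕ × ℕ) := {(0, 0), (1, 0), (0, 1)}

/-- The periodic extension `(d_1 … d_k)^∞` of a block. -/
def cyc (d : List (ℕ × ℕ)) : ℕ → ℕ × ℕ := fun i => d.getD (i % d.length) (0, 0)

/-- Strict lexicographic order on lists. -/
def listLT (u v : List ℕ) : Prop := List.Lex (· < ·) u v

/-- Weak lexicographic order on lists. -/
def listLE (u v : List ℕ) : Prop := listLT u v ∨ u = v

/-- The first components `d_1¹ … d_k¹` of a block over Ω. -/
def comp1 (d : List (ℕ × ℕ)) : List ℕ := d.map Prod.fst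

/-- The second components `d_1² … d_k²` of a block over Ω. -/
def comp2 (d : List (ℕ × ℕ)) : List ℕ := d.map Prod.snd

/-- The digits `(1 - d_1⁺) … (1 - d_k⁺)` where `d⁺ = d¹ + d²`. -/
def comp3 (d : List (ℕ × ℕ)) : List ℕ := d.map fun x => 1 - x.1 - x.2

/-- Cyclic shift of a list by `j`. -/
def rot {α : Type*} (j : ℕ) (l : List α) : List α := l.drop j ++ l.take j

/-- `d` is a representation of the binary block `a`. -/
def IsRepresentation (a : List ℕ) (d : List (ℕ × ℕ)) : Prop :=
  d.length = a.length ∧ (∀ x ∈ d, x ∈ OmegaD) ∧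
  SmallestPeriod (cyc d) a.length ∧
  comp1 d = a ∧ listLE (comp3 d) (comp2 d) ∧ listLE (comp2 d) a ∧
  ∀ j < a.length,
    listLE (comp1 (rot j d)) a ∧ listLE (comp2 (rot j d)) a ∧ listLE (comp3 (rot j d)) a

/-- A binary block is admissible if it has a representation. -/
def IsAdmissible (a : List ℕ) : Prop := ∃ d, IsRepresentation a d

/-- The `i`-th consecutive triple of a block (0-indexed). -/
def tripleAt (a : List ℕ) (i : ℕ) : List ℕ :=
  [a.getD (3 * i) 0, a.getD (3 * i + 1) 0, a.getD (3 * i + 2) 0]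

/-- The edges of the directed graph on {000, 001, 100, 101} defining the subshift `X`. -/
def XEdge (u v : List ℕ) : Prop :=
  (u, v) ∈ ({([1,0,1], [0,0,1]), ([1,0,1], [0,0,0]), ([0,0,1], [0,0,0]),
             ([0,0,0], [1,0,1]), ([0,0,0], [1,0,0]), ([1,0,0], [1,0,1])} :
      Set (List ℕ × List ℕ))


/-! ### Values of binary sequences -/

/-- The value of a digit sequence in base `β`. -/
def val (β : ℝ) (x : ℕ → ℕ) : ℝ := ∑' i : ℕ, (x i : ℝ) / β ^ (i + 1)

/-- The shift. -/
def sh {α : Type*} (n : ℕ) (x : ℕ → α) : ℕ → α := fun i => x (n + i)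

lemma IsBinary.sh {x : ℕ → ℕ} (hx : IsBinary x) (n : ℕ) : IsBinary (sh n x) :=
  fun i => hx (n + i)

lemma geom_summable {β : ℝ} (hβ : 1 < β) : Summable (fun i : ℕ => 1 / β ^ (i + 1)) := by
  have h : Summable (fun i : ℕ => (1 / β) ^ i) := by
    apply summable_geometric_of_lt_one (by positivity)
    rw [div_lt_one (by linarith)]; exact hβ
  have := h.mul_left (1 / β)
  refine this.congr ?_
  intro i
  rw [← pow_succ', one_div_pow]

lemma geom_sum {β : ℝ} (hβ : 1 < β) : ∑' i : ℕ, 1 / β ^ (i + 1) = 1 / (β - 1) := by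
  have h1 : (fun i : ℕ => 1 / β ^ (i + 1)) = fun i : ℕ => (1 / β) * (1 / β) ^ i := by
    funext i
    rw [← pow_succ', one_div_pow]
  rw [h1, tsum_mul_left, tsum_geometric_of_lt_one (by positivity)
    (by rw [div_lt_one (by linarith)]; exact hβ)]
  have : β ≠ 0 := by linarith
  have : β - 1 ≠ 0 := by linarith
  field_simp

lemma term_nonneg {β : ℝ} (hβ : 1 < β) (x : ℕ → ℕ) (i : ℕ) : 0 ≤ (x i : ℝ) / β ^ (i + 1) := by
  positivity

lemma term_le {β : ℝ} (hβ : 1 < β) {x : ℕ → ℕ} (hx : IsBinary x) (i : ℕ) :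
    (x i : ℝ) / β ^ (i + 1) ≤ 1 / β ^ (i + 1) := by
  have : (x i : ℝ) ≤ 1 := by exact_mod_cast hx i
  gcongr

lemma val_summable {β : ℝ} (hβ : 1 < β) {x : ℕ → ℕ} (hx : IsBinary x) :
    Summable (fun i : ℕ => (x i : ℝ) / β ^ (i + 1)) :=
  Summable.of_nonneg_of_le (term_nonneg hβ x) (term_le hβ hx) (geom_summable hβ)

lemma val_nonneg {β : ℝ} (hβ : 1 < β) (x : ℕ → ℕ) : 0 ≤ val β x :=
  tsum_nonneg (term_nonneg hβ x)

lemma val_le {β : ℝ} (hβ : 1 < β) {x : ℕ → ℕ} (hx : IsBinary x) : val β x ≤ 1 / (β - 1) := by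
  rw [← geom_sum hβ]
  exact (val_summable hβ hx).tsum_le_tsum (term_le hβ hx) (geom_summable hβ)

lemma val_split {β : ℝ} (hβ : 1 < β) {x : ℕ → ℕ} (hx : IsBinary x) (N : ℕ) :
    val β x = ∑ i ∈ Finset.range N, (x i : ℝ) / β ^ (i + 1) + (β ^ N)⁻¹ * val β (sh N x) := by
  unfold val
  rw [← (val_summable hβ hx).sum_add_tsum_nat_add N, ← tsum_mul_left]
  congr 1
  apply tsum_congr
  intro i
  have : β ≠ 0 := by linarith
  simp only [sh]
  rw [add_comm i N, show N + i + 1 = N + (i + 1) by ring, pow_add]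
  field_simp

lemma val_succ {β : ℝ} (hβ : 1 < β) {x : ℕ → ℕ} (hx : IsBinary x) :
    val β x = β⁻¹ * (x 0 + val β (sh 1 x)) := by
  rw [val_split hβ hx 1]
  simp
  ring

lemma sh_sh {α : Type*} (x : ℕ → α) (a b : ℕ) : sh a (sh b x) = sh (b + a) x := by
  funext i; simp [sh, add_assoc]

lemma val_diff {β : ℝ} (hβ : 1 < β) {x y : ℕ → ℕ} (hx : IsBinary x) (hy : IsBinary y) (N : ℕ)
    (h : ∀ i < N, x i = y i) :
    val β x - val β y = (β ^ (N + 1))⁻¹ *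
      ((x N : ℝ) - y N + val β (sh (N + 1) x) - val β (sh (N + 1) y)) := by
  rw [val_split hβ hx (N + 1), val_split hβ hy (N + 1), Finset.sum_range_succ,
    Finset.sum_range_succ,
    Finset.sum_congr rfl (fun i hi => by rw [h i (Finset.mem_range.mp hi)])]
  field_simp
  ring

lemma val_strict {β β' : ℝ} (hβ : 1 < β) (hlt : β < β') {x : ℕ → ℕ} (hx : IsBinary x) (j : ℕ)
    (hj : x j ≠ 0) : val β' x < val β x := by
  refine Summable.tsum_lt_tsum (i := j) ?_ ?_ (val_summable (hβ.trans hlt) hx)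
    (val_summable hβ hx)
  · intro i
    have : β ^ (i + 1) ≤ β' ^ (i + 1) := by gcongr
    exact div_le_div_of_nonneg_left (Nat.cast_nonneg _) (by positivity) this
  · have h1 : β ^ (j + 1) < β' ^ (j + 1) := by gcongr
    have : (0 : ℝ) < x j := by exact_mod_cast Nat.pos_of_ne_zero hj
    gcongr

lemma binary_lt {a b : ℕ} (hb : b ≤ 1) (h : a < b) : a = 0 ∧ b = 1 := by omega

/-- If all shifts of `x` are lexicographically at most `a` and `a` has value at most one,
then `x` has value at most one. -/
lemma val_le_one_of_shifts {β : ℝ} (hβ : 1 < β) {a x : ℕ → ℕ} (ha : IsBinary a)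
    (hx : IsBinary x) (hval : val β a ≤ 1) (hs : ∀ n, seqLE (sh n x) a) (n : ℕ) :
    val β (sh n x) ≤ 1 := by
  have hbdd : BddAbove (Set.range fun n => val β (sh n x)) := by
    refine ⟨1 / (β - 1), ?_⟩
    rintro _ ⟨n, rfl⟩
    exact val_le hβ (hx.sh n)
  set s := ⨆ n, val β (sh n x) with hsdef
  have hle : ∀ n, val β (sh n x) ≤ s := fun n => le_ciSup hbdd n
  by_contra hcon
  push Not at hcon
  have hs1 : 1 < s := lt_of_lt_of_le hcon (hle n)
  have key : ∀ n, val β (sh n x) ≤ 1 + (s - 1) / β := by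
    intro n
    rcases hs n with ⟨N, hN, hlt⟩ | heq
    · have := val_diff hβ (hx.sh n) ha N hN
      obtain ⟨h0, h1⟩ := binary_lt (ha N) hlt
      rw [h0, h1, sh_sh] at this
      have h2 := hle (n + (N + 1))
      have h3 := val_nonneg hβ (sh (N + 1) a)
      have hpos : (0 : ℝ) < (β ^ (N + 1))⁻¹ := by positivity
      have h4 : (β ^ (N + 1))⁻¹ ≤ β⁻¹ := by
        apply inv_anti₀ (by positivity)
        exact le_self_pow₀ hβ.le (by omega)
      have h5 : val β (sh n x) - val β a ≤ (β ^ (N + 1))⁻¹ * (s - 1) := by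
        rw [this]
        apply mul_le_mul_of_nonneg_left _ hpos.le
        push_cast
        linarith
      have h6 : (β ^ (N + 1))⁻¹ * (s - 1) ≤ β⁻¹ * (s - 1) :=
        mul_le_mul_of_nonneg_right h4 (by linarith)
      rw [div_eq_inv_mul]
      linarith
    · rw [heq]
      have : 0 ≤ (s - 1) / β := by
        apply div_nonneg <;> linarith
      linarith
  have h7 : s ≤ 1 + (s - 1) / β := ciSup_le key
  have h8 : (s - 1) / β < s - 1 := div_lt_self (by linarith) hβ
  linarith

/-- Comparison of values from the lexicographic order. -/
lemma val_le_of_seqLT {β : ℝ} (hβ : 1 < β) {a x : ℕ → ℕ} (ha : IsBinary a)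
    (hx : IsBinary x) (hval : val β a ≤ 1) (hs : ∀ n, seqLE (sh n a) a) {N : ℕ}
    (hN : ∀ i < N, a i = x i) (hlt : a N < x N) :
    val β a + (β ^ (N + 1))⁻¹ * val β (sh (N + 1) x) ≤ val β x := by
  have h := val_diff hβ hx ha N (fun i hi => (hN i hi).symm)
  obtain ⟨h0, h1⟩ := binary_lt (hx N) hlt
  rw [h0, h1] at h
  have h2 := val_le_one_of_shifts hβ ha ha hval hs (N + 1)
  have hpos : (0 : ℝ) < (β ^ (N + 1))⁻¹ := by positivity
  have : (β ^ (N + 1))⁻¹ * val β (sh (N + 1) x) ≤ val β x - val β a := by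
    rw [h]
    apply mul_le_mul_of_nonneg_left _ hpos.le
    push_cast
    linarith
  linarith

lemma seqLT_total {α : Type*} [LinearOrder α] (a b : ℕ → α) :
    seqLT a b ∨ a = b ∨ seqLT b a := by
  by_cases h : a = b
  · exact Or.inr (Or.inl h)
  · have hex : ∃ n, a n ≠ b n := by
      by_contra hc
      push Not at hc
      exact h (funext hc)
    classical
    have h1 := Nat.find_spec hex
    have h2 : ∀ i < Nat.find hex, a i = b i := by
      intro i hi
      have := Nat.find_min hex hi
      push Not at this
      exact this
    rcases lt_or_gt_of_ne h1 with h3 | h3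
    · exact Or.inl ⟨_, h2, h3⟩
    · exact Or.inr (Or.inr ⟨_, fun i hi => (h2 i hi).symm, h3⟩)

lemma seqLT_irrefl {α : Type*} [Preorder α] (a : ℕ → α) : ¬ seqLT a a := by
  rintro ⟨n, _, h⟩
  exact lt_irrefl _ h

lemma seqLT_asymm {α : Type*} [LinearOrder α] {a b : ℕ → α} (h : seqLT a b) (h' : seqLT b a) :
    False := by
  obtain ⟨n, hn, h1⟩ := h
  obtain ⟨k, hk, h2⟩ := h'
  rcases lt_trichotomy n k with h3 | h3 | h3
  · rw [hk n h3] at h1; exact lt_irrefl _ h1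
  · subst h3; exact lt_asymm h1 h2
  · rw [hn k h3] at h2; exact lt_irrefl _ h2

lemma seqLT_trans {α : Type*} [LinearOrder α] {a b c : ℕ → α} (h : seqLT a b)
    (h' : seqLT b c) : seqLT a c := by
  obtain ⟨n, hn, h1⟩ := h
  obtain ⟨k, hk, h2⟩ := h'
  rcases lt_trichotomy n k with h3 | h3 | h3
  · exact ⟨n, fun i hi => (hn i hi).trans (hk i (hi.trans h3)), by rw [← hk n h3]; exact h1⟩
  · subst h3; exact ⟨n, fun i hi => (hn i hi).trans (hk i hi), h1.trans h2⟩
  · exact ⟨k, fun i hi => (hn i (hi.trans h3)).trans (hk i hi), by rw [hn k h3]; exact h2⟩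

/-- If `val β x < 1` and `β` is below the base of `a`, then `x` is lexicographically below `a`. -/
lemma seqLT_of_val_lt_one {β β₀ : ℝ} (hβ : 1 < β) (hlt : β < β₀) {a x : ℕ → ℕ}
    (ha : IsBinary a) (hx : IsBinary x) (hval : val β₀ a = 1) (hs : ∀ n, seqLE (sh n a) a)
    (hx1 : val β x < 1) : seqLT x a := by
  rcases seqLT_total x a with h | h | ⟨N, hN, h⟩
  · exact h
  · exfalso
    subst h
    have : ∃ j, x j ≠ 0 := by
      by_contra hc
      push Not at hc
      simp [val, hc] at hval
    obtain ⟨j, hj⟩ := this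
    have := val_strict hβ hlt hx j hj
    linarith
  · exfalso
    have h1 := val_le_of_seqLT (hβ.trans hlt) ha hx hval.le hs hN h
    have h2 := val_nonneg (hβ.trans hlt) (sh (N + 1) x)
    have hpos : (0 : ℝ) < β₀ := by linarith
    have h3 : 0 ≤ (β₀ ^ (N + 1))⁻¹ * val β₀ (sh (N + 1) x) := by positivity
    have := val_strict hβ hlt hx N (by omega)
    linarith

/-- Strictly larger sequences have strictly larger bases. -/
lemma base_lt {β β' : ℝ} (hβ : 1 < β) (hβ' : 1 < β') {a x : ℕ → ℕ}
    (ha : IsBinary a) (hx : IsBinary x) (hval : val β a = 1) (hval' : val β' x = 1)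
    (hs : ∀ n, seqLE (sh n a) a) (hx0 : NotEndInZeros x) (h : seqLT a x) : β < β' := by
  obtain ⟨N, hN, h⟩ := h
  have h1 := val_le_of_seqLT hβ ha hx hval.le hs hN h
  obtain ⟨i, hi, hxi⟩ := hx0 (N + 1)
  have hpos : 0 < val β (sh (N + 1) x) := by
    apply (val_summable hβ (hx.sh (N + 1))).tsum_pos (term_nonneg hβ _) (i - (N + 1))
    have : (0 : ℝ) < sh (N + 1) x (i - (N + 1)) := by
      simp only [sh]
      rw [Nat.add_sub_cancel' hi]
      exact_mod_cast Nat.pos_of_ne_zero hxi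
    positivity
  have h2 : 1 < val β x := by
    have : (0 : ℝ) < (β ^ (N + 1))⁻¹ * val β (sh (N + 1) x) := by positivity
    linarith
  by_contra hc
  push Not at hc
  rcases hc.lt_or_eq with h3 | h3
  · have := val_strict hβ' h3 hx N (by omega)
    linarith
  · subst h3; linarith

lemma val_uniq {β β' : ℝ} (hβ : 1 < β) (hβ' : 1 < β') {x : ℕ → ℕ} (hx : IsBinary x)
    (h : val β x = 1) (h' : val β' x = 1) : β = β' := by
  have : ∃ j, x j ≠ 0 := by
    by_contra hc
    push Not at hc
    simp [val, hc] at h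
  obtain ⟨j, hj⟩ := this
  rcases lt_trichotomy β β' with h1 | h1 | h1
  · have := val_strict hβ h1 hx j hj; linarith
  · exact h1
  · have := val_strict hβ' h1 hx j hj; linarith

/-- Existence of the base of a sequence starting with `101`. -/
lemma exists_base {x : ℕ → ℕ} (hx : IsBinary x) (h0 : x 0 = 1) (h2 : x 2 = 1) :
    ∃ β ∈ Set.Icc (1.4 : ℝ) 2, val β x = 1 := by
  have hc : ContinuousOn (fun β => val β x) (Set.Icc (1.4 : ℝ) 2) := by
    unfold val
    apply continuousOn_tsum (u := fun i : ℕ => 1 / (1.4 : ℝ) ^ (i + 1))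
    · intro i
      apply ContinuousOn.div continuousOn_const (by fun_prop)
      intro β hβ
      have : (0 : ℝ) < β := by linarith [hβ.1]
      positivity
    · exact geom_summable (by norm_num)
    · intro i β hβ
      have h14 := hβ.1
      have : (0 : ℝ) < β := by linarith [hβ.1]
      rw [Real.norm_of_nonneg (by positivity)]
      refine (term_le (by linarith) hx i).trans ?_
      gcongr
  have h1 : (1 : ℝ) ≤ val 1.4 x := by
    rw [val_split (by norm_num) hx 3]
    have := val_nonneg (β := 1.4) (by norm_num) (sh 3 x)
    have h3 : (0 : ℝ) ≤ x 1 := by positivity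
    simp only [Finset.sum_range_succ, Finset.sum_range_zero, h0, h2]
    have h4 : (0 : ℝ) ≤ (1.4 ^ 3)⁻¹ * val 1.4 (sh 3 x) := by positivity
    have h5 : (0 : ℝ) ≤ (x 1 : ℝ) / 1.4 ^ (1 + 1) := by positivity
    norm_num at h4 h5 ⊢
    linarith
  have h3 : val 2 x ≤ 1 := by
    have := val_le (β := 2) (by norm_num) hx
    norm_num at this
    exact this
  have := intermediate_value_Icc' (by norm_num) hc (show (1 : ℝ) ∈ Set.Icc _ _ from ⟨h3, h1⟩)
  obtain ⟨β, hβ, h⟩ := this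
  exact ⟨β, hβ, h⟩


/-! ### Combinatorics of binary sequences -/

/-- The tail of `E` from `i`, normalised to start with `false`. -/
def nrm (i : ℕ) (E : ℕ → Bool) : ℕ → Bool := fun j => xor (E i) (E (i + j))

/-- The Thue-Morse substitution `0 ↦ 01`, `1 ↦ 10`. -/
def sub (E : ℕ → Bool) : ℕ → Bool := fun i => xor (E (i / 2)) (decide (i % 2 = 1))

/-- The sequence `0 1 1 0 1 0 1 …`. -/
def hat0 : ℕ → Bool := fun i => decide (i = 1) || (decide (2 ≤ i) && decide (i % 2 = 0))

/-- The limit codes. -/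
def hatE : ℕ → ℕ → Bool
  | 0 => hat0
  | n + 1 => sub (hatE n)

/-- The codes of the extremal periodic sequences. -/
def AE (m : ℕ) : ℕ → ℕ → Bool
  | 0 => fun i => hat0 (i % (2 * m + 1))
  | n + 1 => sub (AE m n)

lemma sub_two_mul (E : ℕ → Bool) (i : ℕ) : sub E (2 * i) = E i := by
  simp [sub]

lemma sub_two_mul_add (E : ℕ → Bool) (i : ℕ) : sub E (2 * i + 1) = !(E i) := by
  have h1 : (2 * i + 1) / 2 = i := by omega
  have h2 : (2 * i + 1) % 2 = 1 := by omega
  simp [sub, h1, h2]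

lemma sub_mono {E F : ℕ → Bool} (h : seqLT E F) : seqLT (sub E) (sub F) := by
  obtain ⟨N, hN, h⟩ := h
  refine ⟨2 * N, ?_, ?_⟩
  · intro i hi
    simp only [sub]
    rw [hN (i / 2) (by omega)]
  · rw [sub_two_mul, sub_two_mul]; exact h

lemma sub_monoLE {E F : ℕ → Bool} (h : seqLE E F) : seqLE (sub E) (sub F) := by
  rcases h with h | h
  · exact Or.inl (sub_mono h)
  · exact Or.inr (by rw [h])

lemma nrm_sub (E : ℕ → Bool) (i : ℕ) : nrm (2 * i) (sub E) = sub (nrm i E) := by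
  funext j
  simp only [nrm, sub]
  have h1 : (2 * i + j) / 2 = i + j / 2 := by omega
  have h2 : (2 * i + j) % 2 = j % 2 := by omega
  have h3 : (2 * i) / 2 = i := by omega
  have h4 : (2 * i) % 2 = 0 := by omega
  rw [h1, h2, h3, h4]
  simp

lemma AE_prefix (m : ℕ) (hm : 1 ≤ m) (n : ℕ) :
    AE m n 0 = false ∧ AE m n 1 = true ∧ AE m n 2 = true ∧ AE m n 3 = false := by
  induction n with
  | zero =>
    have h0 : 0 % (2 * m + 1) = 0 := by simp
    have h1 : 1 % (2 * m + 1) = 1 := Nat.mod_eq_of_lt (by omega)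
    have h2 : 2 % (2 * m + 1) = 2 := Nat.mod_eq_of_lt (by omega)
    refine ⟨?_, ?_, ?_, ?_⟩ <;> simp only [AE, h0, h1, h2]
    · simp [hat0]
    · simp [hat0]
    · simp [hat0]
    · rcases Nat.lt_or_ge 1 m with h | h
      · rw [Nat.mod_eq_of_lt (by omega)]; simp [hat0]
      · have : m = 1 := by omega
        subst this; simp [hat0]
  | succ n ih =>
    obtain ⟨h0, h1, h2, h3⟩ := ih
    simp [AE, sub, h0, h1]

lemma AE_periodic (m n : ℕ) (i : ℕ) : AE m n (i + (2 * m + 1) * 2 ^ n) = AE m n i := by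
  induction n generalizing i with
  | zero => simp [AE]
  | succ n ih =>
    simp only [AE, sub]
    have h1 : (i + (2 * m + 1) * 2 ^ (n + 1)) = i + 2 * ((2 * m + 1) * 2 ^ n) := by ring
    have h2 : (i + 2 * ((2 * m + 1) * 2 ^ n)) / 2 = i / 2 + (2 * m + 1) * 2 ^ n := by omega
    have h3 : (i + 2 * ((2 * m + 1) * 2 ^ n)) % 2 = i % 2 := by omega
    rw [h1, h2, h3, ih]

lemma periodic_mul {α : Type*} {E : ℕ → α} {P : ℕ} (h : ∀ i, E (i + P) = E i) (q i : ℕ) :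
    E (i + q * P) = E i := by
  induction q with
  | zero => simp
  | succ q ih => rw [show i + (q + 1) * P = (i + q * P) + P by ring, h, ih]

lemma AE_max (m : ℕ) (hm : 1 ≤ m) (n i : ℕ) :
    ((2 * m + 1) * 2 ^ n ∣ i) ∨ seqLT (nrm i (AE m n)) (AE m n) := by
  induction n generalizing i with
  | zero =>
    by_cases hd : (2 * m + 1) * 2 ^ 0 ∣ i
    · exact Or.inl hd
    right
    obtain ⟨a0, a1, a2, -⟩ := AE_prefix m hm 0
    set K := 2 * m + 1 with hK
    have hlt : i % K < K := Nat.mod_lt _ (by omega)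
    have hne : i % K ≠ 0 := by
      intro h; apply hd; simpa using Nat.dvd_of_mod_eq_zero h
    have hper : ∀ j, AE m 0 (i + j) = AE m 0 (i % K + j) := by
      intro j
      simp only [AE, ← hK, Nat.mod_add_mod]
    have hn : nrm i (AE m 0) = nrm (i % K) (AE m 0) := by
      funext j
      simp only [nrm]
      rw [hper j]
      have := hper 0
      simp only [add_zero] at this
      rw [this]
    rw [hn]
    generalize i % K = r at hlt hne
    by_cases hr : r = 1
    · subst hr
      refine ⟨1, ?_, ?_⟩
      · intro j hj
        have : j = 0 := by omega
        subst this
        simp [nrm, a0]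
      · simp [nrm, a1, a2]
    · have e0 : AE m 0 r = decide (r % 2 = 0) := by
        simp only [AE, ← hK, Nat.mod_eq_of_lt hlt, hat0]
        simp [hr]; omega
      have e1 : AE m 0 (r + 1) = decide (r % 2 = 1) := by
        simp only [AE, ← hK]
        rcases Nat.lt_or_ge (r + 1) K with h | h
        · rw [Nat.mod_eq_of_lt h]
          simp [hat0]
          grind
        · have : r + 1 = K := by omega
          rw [this, Nat.mod_self]
          simp [hat0]; omega
      have e2 : AE m 0 (r + 2) = decide (r % 2 = 0) := by
        simp only [AE, ← hK]
        rcases Nat.lt_or_ge (r + 2) K with h | h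
        · rw [Nat.mod_eq_of_lt h]
          simp [hat0]
        · rcases Nat.lt_or_ge (r + 1) K with h' | h'
          · have : r + 2 = K := by omega
            rw [this, Nat.mod_self]
            simp [hat0]; omega
          · have : r + 2 = 1 + K := by omega
            rw [this, Nat.add_mod_right, Nat.mod_eq_of_lt (by omega)]
            simp [hat0]; omega
      refine ⟨2, ?_, ?_⟩
      · intro j hj
        have : j = 0 ∨ j = 1 := by omega
        rcases this with rfl | rfl
        · simp [nrm, a0]
        · simp only [nrm, a1, e0, e1]
          rcases Nat.mod_two_eq_zero_or_one r with h | h <;> simp [h]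
      · simp [nrm, a2, e0, e2]
  | succ n ih =>
    obtain ⟨b0, b1, b2, -⟩ := AE_prefix m hm (n + 1)
    rcases Nat.even_or_odd' i with ⟨j, rfl | rfl⟩
    · rcases ih j with h | h
      · left
        rw [pow_succ, ← mul_assoc, mul_comm]
        exact Nat.mul_dvd_mul_left 2 h
      · right
        simp only [AE]
        rw [nrm_sub]
        exact sub_mono h
    · right
      have e1 : AE m (n + 1) (2 * j + 1) = !(AE m n j) := sub_two_mul_add _ _
      have e2 : AE m (n + 1) (2 * j + 1 + 1) = AE m n (j + 1) := sub_two_mul _ (j + 1)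
      have e3 : AE m (n + 1) (2 * j + 1 + 2) = !(AE m n (j + 1)) := sub_two_mul_add _ (j + 1)
      by_cases hc : AE m n j = AE m n (j + 1)
      · refine ⟨2, ?_, ?_⟩
        · intro k hk
          have : k = 0 ∨ k = 1 := by omega
          rcases this with rfl | rfl
          · simp [nrm, b0]
          · simp [nrm, b1, e1, e2, hc]
        · simp [nrm, b2, e1, e3, hc]
      · refine ⟨1, ?_, ?_⟩
        · intro k hk
          have : k = 0 := by omega
          subst this
          simp [nrm, b0]
        · simp only [nrm, b1, e1, e2]
          revert hc
          cases AE m n j <;> cases AE m n (j + 1) <;> simp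

lemma AE_maxLE (m : ℕ) (hm : 1 ≤ m) (n i : ℕ) : seqLE (nrm i (AE m n)) (AE m n) := by
  rcases AE_max m hm n i with ⟨q, rfl⟩ | h
  · right
    funext j
    simp only [nrm]
    have h1 := periodic_mul (AE_periodic m n) q j
    have h2 := periodic_mul (AE_periodic m n) q 0
    simp only [zero_add] at h2
    rw [mul_comm _ q, add_comm _ j, h1, h2, (AE_prefix m hm n).1]
    simp
  · exact Or.inl h

lemma AE_anti (m : ℕ) (hm : 1 ≤ m) (n : ℕ) : seqLT (AE (m + 1) n) (AE m n) := by
  induction n with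
  | zero =>
    have key : ∀ j, j ≤ 2 → AE m 0 (2 * m + 1 + j) = AE m 0 j := by
      intro j _
      have := AE_periodic m 0 j
      simp only [pow_zero, mul_one] at this
      rw [add_comm, this]
    obtain ⟨a0, a1, a2, -⟩ := AE_prefix m hm 0
    have k0 := key 0 (by omega)
    have k1 := key 1 (by omega)
    have k2 := key 2 (by omega)
    have hlow : ∀ i, i < 2 * m + 3 → AE (m + 1) 0 i = hat0 i := by
      intro i hi
      simp only [AE]
      rw [Nat.mod_eq_of_lt (by omega)]
    have hlow' : ∀ i, i < 2 * m + 1 → AE m 0 i = hat0 i := by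
      intro i hi
      simp only [AE]
      rw [Nat.mod_eq_of_lt (by omega)]
    refine ⟨2 * m + 3, ?_, ?_⟩
    · intro i hi
      rw [hlow i hi]
      rcases Nat.lt_or_ge i (2 * m + 1) with h | h
      · rw [hlow' i h]
      · have : i = 2 * m + 1 + 0 ∨ i = 2 * m + 1 + 1 := by omega
        rcases this with rfl | rfl
        · rw [k0, a0]; simp [hat0]; omega
        · rw [k1, a1]; simp [hat0]; omega
    · have : AE (m + 1) 0 (2 * m + 3) = false := by
        simp only [AE]
        rw [show 2 * (m + 1) + 1 = 2 * m + 3 by ring, Nat.mod_self]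
        simp [hat0]
      rw [this, show 2 * m + 3 = 2 * m + 1 + 2 by ring, k2, a2]
      decide
  | succ n ih => exact sub_mono ih

lemma AE_lt_hat0 (m : ℕ) (hm : 1 ≤ m) (n : ℕ) : seqLT (AE m (n + 1)) hat0 := by
  obtain ⟨h0, h1, h2, h3⟩ := AE_prefix m hm n
  refine ⟨6, ?_, ?_⟩
  · intro i hi
    interval_cases i <;> simp [AE, sub, h0, h1, h2, hat0]
  · simp [AE, sub, h3, hat0]

/-- The hopping lemma. -/
lemma hop {E : ℕ → Bool} (h : ∀ i, seqLT (nrm i E) hat0) (hne : ∃ i, E i ≠ E (i + 1)) :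
    ∃ i₀, ∀ j, E (i₀ + 2 * j) ≠ E (i₀ + 2 * j + 1) := by
  by_cases h011 : ∃ i, E i ≠ E (i + 1) ∧ E (i + 1) = E (i + 2)
  · obtain ⟨i, h1, h2⟩ := h011
    have start : ∀ q, E q ≠ E (q + 1) → E (q + 1) = E (q + 2) →
        ∀ l ≤ 2, nrm q E l = hat0 l := by
      intro q h1 h2 l hl
      have : l = 0 ∨ l = 1 ∨ l = 2 := by omega
      rcases this with rfl | rfl | rfl
      · simp [nrm, hat0]
      · simp only [nrm, hat0]
        revert h1; cases E q <;> cases E (q + 1) <;> simp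
      · simp only [nrm, hat0, ← h2]
        revert h1; cases E q <;> cases E (q + 1) <;> simp
    have hstep : ∀ p L, 2 ≤ L → L % 2 = 0 → (∀ l ≤ L, nrm p E l = hat0 l) →
        E (p + L) ≠ E (p + L + 1) := by
      intro p L hL2 hL hl heq
      have e1 : nrm p E (L + 1) = true := by
        have := hl L le_rfl
        simp only [nrm] at this ⊢
        rw [← add_assoc, ← heq, this]
        simp [hat0, hL2, hL]
      refine seqLT_asymm (h p) ⟨L + 1, ?_, ?_⟩
      · intro i hi
        exact (hl i (by omega)).symm
      · rw [e1]
        have : hat0 (L + 1) = false := by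
          simp [hat0]; omega
        rw [this]; decide
    have S : ∀ j, ∃ p L, 2 ≤ L ∧ L % 2 = 0 ∧ p + L = i + 2 * j + 2 ∧
        ∀ l ≤ L, nrm p E l = hat0 l := by
      intro j
      induction j with
      | zero => exact ⟨i, 2, le_rfl, rfl, by ring, start i h1 h2⟩
      | succ j ih =>
        obtain ⟨p, L, hL2, hL, hp, hl⟩ := ih
        have hq := hstep p L hL2 hL hl
        by_cases hc : E (p + L + 1) = E (p + L + 2)
        · exact ⟨p + L, 2, le_rfl, rfl, by omega, start (p + L) hq hc⟩
        · refine ⟨p, L + 2, by omega, by omega, by omega, ?_⟩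
          intro l hl'
          rcases Nat.lt_or_ge L l with hlt | hge
          · have hL0 := hl L le_rfl
            have hhat : hat0 L = true := by simp [hat0, hL2, hL]
            rw [hhat] at hL0
            simp only [nrm] at hL0
            have : l = L + 1 ∨ l = L + 2 := by omega
            rcases this with rfl | rfl
            · have : hat0 (L + 1) = false := by simp [hat0]; omega
              rw [this]
              simp only [nrm, ← add_assoc]
              revert hq hL0
              cases E p <;> cases E (p + L) <;> cases E (p + L + 1) <;> simp
            · have : hat0 (L + 2) = true := by simp [hat0]; omega
              rw [this]
              simp only [nrm, ← add_assoc]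
              revert hq hL0 hc
              cases E p <;> cases E (p + L) <;> cases E (p + L + 1) <;>
                cases E (p + L + 2) <;> simp
          · exact hl l hge
    refine ⟨i, ?_⟩
    intro j
    cases j with
    | zero => simpa using h1
    | succ j =>
      obtain ⟨p, L, hL2, hL, hp, hl⟩ := S j
      have := hstep p L hL2 hL hl
      rw [hp] at this
      exact this
  · push Not at h011
    obtain ⟨i, hi⟩ := hne
    refine ⟨i, ?_⟩
    have : ∀ j, E (i + j) ≠ E (i + j + 1) := by
      intro j
      induction j with
      | zero => simpa using hi
      | succ j ih => exact h011 (i + j) ih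
    intro j
    exact this (2 * j)

lemma exists_change {E : ℕ → Bool} {q : ℕ} (h : ¬ ∀ i, E (i + q) = E i) :
    ∃ i, E i ≠ E (i + 1) := by
  by_contra hc
  push Not at hc
  apply h
  intro i
  induction q with
  | zero => rfl
  | succ q ih =>
    rw [← add_assoc, ← hc (i + q)]
    by_contra h2
    apply h2
    clear h2 ih h
    induction q with
    | zero => rfl
    | succ q ih => rw [← add_assoc, ← hc (i + q)]; exact ih

/-- The lower bound for codes. -/
theorem core (m : ℕ) (hm : 1 ≤ m) (n : ℕ) (E : ℕ → Bool)
    (hp : ∀ i, E (i + (2 * m + 1) * 2 ^ n) = E i) (hnp : ¬ ∀ i, E (i + 2 ^ n) = E i) :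
    ∃ i, seqLE (AE m n) (nrm i E) := by
  by_contra hcon
  have hcon' : ∀ i, seqLT (nrm i E) (AE m n) := by
    intro i
    rcases seqLT_total (nrm i E) (AE m n) with h | h | h
    · exact h
    · exact absurd ⟨i, Or.inr h.symm⟩ hcon
    · exact absurd ⟨i, Or.inl h⟩ hcon
  clear hcon
  induction n generalizing E with
  | zero =>
    simp only [pow_zero, mul_one] at hp
    have hh : ∀ i, seqLT (nrm i E) hat0 := by
      intro i
      obtain ⟨N, hN, hlt⟩ := hcon' i
      have hlow' : ∀ i, i < 2 * m + 1 → AE m 0 i = hat0 i := by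
        intro i hi
        simp only [AE]
        rw [Nat.mod_eq_of_lt (by omega)]
      rcases Nat.lt_or_ge N (2 * m + 1) with h | h
      · refine ⟨N, ?_, ?_⟩
        · intro j hj
          rw [hN j hj, hlow' j (by omega)]
        · rw [← hlow' N h]; exact hlt
      · exfalso
        have e1 : ∀ j, nrm i E j = nrm i E (j % (2 * m + 1)) := by
          intro j
          simp only [nrm]
          have := periodic_mul hp (j / (2 * m + 1)) (i + j % (2 * m + 1))
          rw [← this, add_assoc, Nat.mod_add_div']
        have e2 : ∀ j, AE m 0 j = AE m 0 (j % (2 * m + 1)) := by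
          intro j
          simp [AE]
        have hmod : N % (2 * m + 1) < 2 * m + 1 := Nat.mod_lt _ (by omega)
        rw [e1 N, e2 N, hN _ (by omega)] at hlt
        exact lt_irrefl _ hlt
    obtain ⟨i₀, hi₀⟩ := hop hh (exists_change hnp)
    have hall : ∀ j, E (i₀ + j) ≠ E (i₀ + j + 1) := by
      intro j
      rcases Nat.even_or_odd' j with ⟨k, rfl | rfl⟩
      · exact hi₀ k
      · have := hi₀ (k + m + 1)
        rw [show i₀ + 2 * (k + m + 1) = i₀ + (2 * k + 1) + (2 * m + 1) by ring, hp,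
          show i₀ + (2 * k + 1) + (2 * m + 1) + 1 = i₀ + (2 * k + 1) + 1 + (2 * m + 1) by ring,
          hp] at this
        exact this
    have hev : ∀ k, E (i₀ + 2 * k) = E i₀ := by
      intro k
      induction k with
      | zero => rfl
      | succ k ih =>
        have h1 := hall (2 * k)
        have h2 := hall (2 * k + 1)
        rw [← ih]
        rw [show i₀ + 2 * (k + 1) = i₀ + (2 * k + 1) + 1 by ring]
        rw [show i₀ + 2 * k + 1 = i₀ + (2 * k + 1) by ring] at h1
        revert h1 h2
        cases E (i₀ + 2 * k) <;> cases E (i₀ + (2 * k + 1)) <;>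
          cases E (i₀ + (2 * k + 1) + 1) <;> simp
    have h1 := hall (2 * m)
    rw [hev m, show i₀ + 2 * m + 1 = i₀ + (2 * m + 1) by ring, hp] at h1
    exact h1 rfl
  | succ n ih =>
    have hh : ∀ i, seqLT (nrm i E) hat0 := fun i => seqLT_trans (hcon' i) (AE_lt_hat0 m hm n)
    obtain ⟨i₀, hi₀⟩ := hop hh (exists_change hnp)
    set h : ℕ → Bool := fun j => E (i₀ + 2 * j) with hdef
    have hE : ∀ j, E (i₀ + j) = sub h j := by
      intro j
      rcases Nat.even_or_odd' j with ⟨k, rfl | rfl⟩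
      · rw [sub_two_mul]
      · rw [sub_two_mul_add]
        have := hi₀ k
        simp only [hdef]
        rw [← add_assoc]
        revert this
        cases E (i₀ + 2 * k) <;> cases E (i₀ + 2 * k + 1) <;> simp
    refine ih h ?_ ?_ ?_
    · intro i
      simp only [hdef]
      rw [← hp (i₀ + 2 * i)]
      congr 1
      ring
    · intro hper
      apply hnp
      have hsub : ∀ j, E (i₀ + j + 2 ^ (n + 1)) = E (i₀ + j) := by
        intro j
        rw [add_assoc, hE, hE]
        simp only [sub]
        rw [pow_succ]
        have h1 : (j + 2 ^ n * 2) / 2 = j / 2 + 2 ^ n := by omega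
        have h2 : (j + 2 ^ n * 2) % 2 = j % 2 := by omega
        rw [h1, h2, hper]
      intro i
      set P := (2 * m + 1) * 2 ^ (n + 1) with hP
      have hP1 : 1 ≤ P := Nat.one_le_iff_ne_zero.mpr (by positivity)
      have h1 := periodic_mul hp i₀ (i + 2 ^ (n + 1))
      have h2 := periodic_mul hp i₀ i
      have hge : i₀ ≤ i₀ * P := Nat.le_mul_of_pos_right _ hP1
      have h3 := hsub (i + (i₀ * P - i₀))
      rw [show i₀ + (i + (i₀ * P - i₀)) + 2 ^ (n + 1) = i + 2 ^ (n + 1) + i₀ * P by omega,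
        show i₀ + (i + (i₀ * P - i₀)) = i + i₀ * P by omega, h1, h2] at h3
      exact h3
    · intro j
      rcases seqLT_total (nrm j h) (AE m n) with hh | hh | hh
      · exact hh
      all_goals
        exfalso
        have e : nrm (i₀ + 2 * j) E = sub (nrm j h) := by
          rw [← nrm_sub]
          funext k
          simp only [nrm]
          rw [hE, add_assoc, hE]
        have hlt := hcon' (i₀ + 2 * j)
        rw [e] at hlt
      · rw [hh] at hlt
        exact seqLT_irrefl _ hlt
      · exact seqLT_asymm hlt (sub_mono hh)


/-! ### Triples -/

/-- The binary sequence made of triples coded by `E`. -/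
def tri (E : ℕ → Bool) : ℕ → ℕ := fun i =>
  if i % 3 = 0 then (!(E (i / 3))).toNat else if i % 3 = 1 then 0 else (E (i / 3 + 1)).toNat

lemma tri_zero (E : ℕ → Bool) (i : ℕ) : tri E (3 * i) = (!(E i)).toNat := by
  simp [tri]

lemma tri_one (E : ℕ → Bool) (i : ℕ) : tri E (3 * i + 1) = 0 := by
  have h : (3 * i + 1) % 3 = 1 := by omega
  simp [tri, h]

lemma tri_two (E : ℕ → Bool) (i : ℕ) : tri E (3 * i + 2) = (E (i + 1)).toNat := by
  have h : (3 * i + 2) % 3 = 2 := by omega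
  have h' : (3 * i + 2) / 3 = i := by omega
  simp [tri, h, h']

lemma three_cases (i : ℕ) : ∃ j, i = 3 * j ∨ i = 3 * j + 1 ∨ i = 3 * j + 2 :=
  ⟨i / 3, by omega⟩

lemma tri_binary (E : ℕ → Bool) : IsBinary (tri E) := by
  intro i
  obtain ⟨j, rfl | rfl | rfl⟩ := three_cases i
  · rw [tri_zero]; exact Bool.toNat_le _
  · rw [tri_one]; omega
  · rw [tri_two]; exact Bool.toNat_le _

lemma tri_mono {E F : ℕ → Bool} (h0 : E 0 = F 0) (h : seqLT E F) : seqLT (tri E) (tri F) := by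
  obtain ⟨N, hN, h⟩ := h
  rcases N with _ | N
  · rw [h0] at h; exact absurd h (lt_irrefl _)
  refine ⟨3 * N + 2, ?_, ?_⟩
  · intro i hi
    obtain ⟨j, rfl | rfl | rfl⟩ := three_cases i
    · rw [tri_zero, tri_zero, hN j (by omega)]
    · rw [tri_one, tri_one]
    · rw [tri_two, tri_two, hN (j + 1) (by omega)]
  · rw [tri_two, tri_two]
    revert h
    cases E (N + 1) <;> cases F (N + 1) <;> simp

lemma tri_monoLE {E F : ℕ → Bool} (h0 : E 0 = F 0) (h : seqLE E F) :
    seqLE (tri E) (tri F) := by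
  rcases h with h | h
  · exact Or.inl (tri_mono h0 h)
  · exact Or.inr (by rw [h])

lemma sh_tri (E : ℕ → Bool) (i : ℕ) : sh (3 * i) (tri E) = tri (sh i E) := by
  funext k
  obtain ⟨j, rfl | rfl | rfl⟩ := three_cases k
  · rw [tri_zero]; simp only [sh]; rw [← mul_add, tri_zero]
  · rw [tri_one]; simp only [sh]; rw [← add_assoc, ← mul_add, tri_one]
  · rw [tri_two]; simp only [sh]; rw [← add_assoc, ← mul_add, tri_two, add_assoc]

/-- The extremal sequence. -/
def aS (m n : ℕ) : ℕ → ℕ := tri (AE m n)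

lemma aS_prefix (m : ℕ) (hm : 1 ≤ m) (n : ℕ) :
    aS m n 0 = 1 ∧ aS m n 1 = 0 ∧ aS m n 2 = 1 ∧ aS m n 3 = 0 ∧ aS m n 4 = 0 ∧ aS m n 5 = 1 ∧
      aS m n 6 = 0 ∧ aS m n 7 = 0 ∧ aS m n 8 = 0 := by
  obtain ⟨h0, h1, h2, h3⟩ := AE_prefix m hm n
  simp [aS, tri, h0, h1, h2, h3]

lemma lt_of_zero {x a : ℕ → ℕ} (hx : x 0 = 0) (ha : a 0 = 1) : seqLE x a :=
  Or.inl ⟨0, by simp, by omega⟩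

lemma lt_of_100 {x a : ℕ → ℕ} (hx : IsBinary x) (hx1 : x 1 = 0) (hx2 : x 2 = 0) (ha : a 0 = 1)
    (ha1 : a 1 = 0) (ha2 : a 2 = 1) : seqLE x a := by
  rcases Nat.eq_zero_or_pos (x 0) with h | h
  · exact lt_of_zero h ha
  · have : x 0 = 1 := by have := hx 0; omega
    refine Or.inl ⟨2, ?_, by omega⟩
    intro i hi
    have : i = 0 ∨ i = 1 := by omega
    rcases this with rfl | rfl <;> omega

lemma sh_tri_le (m : ℕ) (hm : 1 ≤ m) (n : ℕ) (E : ℕ → Bool)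
    (h : ∀ i, E i = false → seqLE (sh i E) (AE m n)) (k : ℕ) :
    seqLE (sh k (tri E)) (aS m n) := by
  obtain ⟨h0, h1, h2, -⟩ := aS_prefix m hm n
  obtain ⟨j, rfl | rfl | rfl⟩ := three_cases k
  · rcases hE : E j with _ | _
    · rw [sh_tri]
      apply tri_monoLE _ (h j hE)
      rw [(AE_prefix m hm n).1]
      simpa [sh] using hE
    · apply lt_of_zero _ h0
      simp only [sh, add_zero]
      rw [tri_zero, hE]; rfl
  · apply lt_of_zero _ h0
    simp only [sh, add_zero]
    rw [tri_one]
  · rcases hE : E (j + 1) with _ | _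
    · apply lt_of_zero _ h0
      simp only [sh, add_zero]
      rw [tri_two, hE]; rfl
    · apply lt_of_100 ((tri_binary E).sh _) _ _ h0 h1 h2
      · simp only [sh]
        rw [show 3 * j + 2 + 1 = 3 * (j + 1) by ring, tri_zero, hE]; rfl
      · simp only [sh]
        rw [show 3 * j + 2 + 2 = 3 * (j + 1) + 1 by ring, tri_one]

lemma AE_shift_false (m : ℕ) (hm : 1 ≤ m) (n i : ℕ) (h : AE m n i = false) :
    seqLE (sh i (AE m n)) (AE m n) := by
  have h1 := AE_maxLE m hm n i
  have h2 : nrm i (AE m n) = sh i (AE m n) := by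
    funext j; simp [nrm, sh, h]
  rwa [h2] at h1

lemma AE_shift_true (m : ℕ) (hm : 1 ≤ m) (n i : ℕ) (h : (!(AE m n i)) = false) :
    seqLE (sh i (fun j => !(AE m n j))) (AE m n) := by
  have h1 := AE_maxLE m hm n i
  have h' : AE m n i = true := by simpa using h
  have h2 : nrm i (AE m n) = sh i (fun j => !(AE m n j)) := by
    funext j; simp [nrm, sh, h']
  rwa [h2] at h1

lemma aS_shift (m : ℕ) (hm : 1 ≤ m) (n k : ℕ) : seqLE (sh k (aS m n)) (aS m n) :=
  sh_tri_le m hm n _ (AE_shift_false m hm n) k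

lemma aS_notEnd (m : ℕ) (hm : 1 ≤ m) (n : ℕ) : NotEndInZeros (aS m n) := by
  intro N
  refine ⟨3 * (0 + N * ((2 * m + 1) * 2 ^ n)), ?_, ?_⟩
  · have : 1 ≤ (2 * m + 1) * 2 ^ n := Nat.one_le_iff_ne_zero.mpr (by positivity)
    nlinarith
  · unfold aS
    rw [tri_zero, periodic_mul (AE_periodic m n), (AE_prefix m hm n).1]
    decide

/-! ### Words over three letters -/

/-- The indicator sequence of a letter. -/
def ind (k : Fin 3) (w : ℕ → Fin 3) : ℕ → ℕ := fun i => if w i = k then 1 else 0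

lemma ind_binary (k : Fin 3) (w : ℕ → Fin 3) : IsBinary (ind k w) := by
  intro i; unfold ind; split_ifs <;> omega

/-- The extremal word. -/
def word (m n : ℕ) : ℕ → Fin 3 := fun i =>
  if i % 3 = 1 then 1 else if aS m n i = 1 then 0 else 2

lemma word_ind0 (m n : ℕ) : ind 0 (word m n) = tri (AE m n) := by
  funext i
  obtain ⟨j, rfl | rfl | rfl⟩ := three_cases i
  · have h : (3 * j) % 3 = 0 := by omega
    have e : aS m n (3 * j) = _ := tri_zero _ _
    rw [tri_zero]
    simp only [ind, word, h, e]
    cases AE m n j <;> simp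
  · have h : (3 * j + 1) % 3 = 1 := by omega
    rw [tri_one]
    simp [ind, word, h]
  · have h : (3 * j + 2) % 3 = 2 := by omega
    have e : aS m n (3 * j + 2) = _ := tri_two _ _
    rw [tri_two]
    simp only [ind, word, h, e]
    cases AE m n (j + 1) <;> simp

lemma word_ind2 (m n : ℕ) : ind 2 (word m n) = tri (fun j => !(AE m n j)) := by
  funext i
  obtain ⟨j, rfl | rfl | rfl⟩ := three_cases i
  · have h : (3 * j) % 3 = 0 := by omega
    have e : aS m n (3 * j) = _ := tri_zero _ _
    rw [tri_zero]
    simp only [ind, word, h, e]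
    cases AE m n j <;> simp
  · have h : (3 * j + 1) % 3 = 1 := by omega
    rw [tri_one]
    simp [ind, word, h]
  · have h : (3 * j + 2) % 3 = 2 := by omega
    have e : aS m n (3 * j + 2) = _ := tri_two _ _
    rw [tri_two]
    simp only [ind, word, h, e]
    cases AE m n (j + 1) <;> simp

lemma word_ind1 (m n i : ℕ) : ind 1 (word m n) i = if i % 3 = 1 then 1 else 0 := by
  simp only [ind, word]
  split_ifs <;> simp_all

lemma word_shift (m : ℕ) (hm : 1 ≤ m) (n : ℕ) (c : Fin 3) (k : ℕ) :
    seqLE (sh k (ind c (word m n))) (aS m n) := by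
  obtain ⟨h0, h1, h2, -⟩ := aS_prefix m hm n
  fin_cases c
  · simp only [Fin.zero_eta]
    rw [word_ind0]
    exact aS_shift m hm n k
  · simp only [Fin.mk_one]
    by_cases hk : k % 3 = 1
    · apply lt_of_100 ((ind_binary _ _).sh _) _ _ h0 h1 h2 <;> simp only [sh, word_ind1]
      · rw [if_neg (by omega)]
      · rw [if_neg (by omega)]
    · apply lt_of_zero _ h0
      simp only [sh, word_ind1, add_zero]
      rw [if_neg hk]
  · simp only [Fin.reduceFinMk]
    rw [word_ind2]
    exact sh_tri_le m hm n _ (AE_shift_true m hm n) k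

lemma word_smallest (m : ℕ) (hm : 1 ≤ m) (n : ℕ) :
    SmallestPeriod (word m n) (3 * (2 * m + 1) * 2 ^ n) := by
  refine ⟨by positivity, ?_, ?_⟩
  · intro i
    have h1 : aS m n (i + 3 * (2 * m + 1) * 2 ^ n) = aS m n i := by
      have h2 : sh (3 * ((2 * m + 1) * 2 ^ n)) (tri (AE m n)) = tri (AE m n) := by
        rw [sh_tri]
        congr 1
        funext j
        simp only [sh]
        rw [add_comm, AE_periodic]
      have := congrFun h2 i
      simp only [sh] at this
      rw [add_comm, mul_assoc]
      exact this
    have h2 : (i + 3 * (2 * m + 1) * 2 ^ n) % 3 = i % 3 := by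
      rw [mul_assoc]; omega
    simp only [word, h1, h2]
  · intro j hj0 hj
    by_contra hc
    push Not at hc
    have hmod : (1 + j) % 3 = 1 := by
      have h1 : ind 1 (word m n) (1 + j) = ind 1 (word m n) 1 := by
        simp only [ind, hc 1]
      rw [word_ind1, word_ind1] at h1
      by_contra h2
      rw [if_neg h2] at h1
      simp at h1
    obtain ⟨r, rfl⟩ : ∃ r, j = 3 * r := ⟨j / 3, by omega⟩
    have hA : ∀ i, AE m n (r + i) = AE m n i := by
      intro i
      have h1 : ind 0 (word m n) (3 * i + 3 * r) = ind 0 (word m n) (3 * i) := by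
        simp only [ind, hc (3 * i)]
      rw [word_ind0, ← mul_add, tri_zero, tri_zero, add_comm] at h1
      revert h1
      cases AE m n (r + i) <;> cases AE m n i <;> simp
    rcases AE_max m hm n r with h | h
    · have := Nat.le_of_dvd (by omega) h
      rw [mul_assoc] at hj
      omega
    · have : nrm r (AE m n) = AE m n := by
        funext i
        simp only [nrm]
        rw [hA i]
        have := hA 0
        rw [add_zero] at this
        rw [this, (AE_prefix m hm n).1]
        simp
      rw [this] at h
      exact seqLT_irrefl _ h

lemma third : ∀ a b c d : Fin 3, a ≠ b → c ≠ a → c ≠ b → d ≠ a → d ≠ b → c = d := by decide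

section structureLemmas

variable {v : ℕ → Fin 3}

lemma no_xyxy
    (h1 : ∀ i, v i ≠ v (i + 1))
    (h2 : ∀ i, v i = v (i + 2) → v i ≠ v (i + 4))
    (h3 : ∀ i, v i = v (i + 2) → v i = v (i + 5) → v i ≠ v (i + 7))
    (h4 : ∀ i, v i = v (i + 2) → v i = v (i + 5) → v i ≠ v (i + 8))
    (i : ℕ) (ha : v i = v (i + 2)) : v (i + 1) ≠ v (i + 3) := by
  intro hb
  have a0 := h1 i
  have a3 := h1 (i + 3)
  have a4 := h1 (i + 4)
  have a5 := h1 (i + 5)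
  have a6 := h1 (i + 6)
  have a7 := h1 (i + 7)
  have b0 := h2 i ha
  have b1 := h2 (i + 1) hb
  have b4 := h2 (i + 4)
  have c0 := h3 i ha
  have c1 := h3 (i + 1) hb
  have d0 := h4 i ha
  simp only [add_assoc, Nat.reduceAdd] at *
  have e5 : v i = v (i + 5) := by grind
  have f7 := c0 e5
  have f8 := d0 e5
  grind

lemma flip_step
    (h1 : ∀ i, v i ≠ v (i + 1))
    (h2 : ∀ i, v i = v (i + 2) → v i ≠ v (i + 4))
    (h3 : ∀ i, v i = v (i + 2) → v i = v (i + 5) → v i ≠ v (i + 7))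
    (h4 : ∀ i, v i = v (i + 2) → v i = v (i + 5) → v i ≠ v (i + 8))
    (i : ℕ) (ha : v i = v (i + 2)) :
    v (i + 4) = v (i + 1) ∧
      (v (i + 3) = v (i + 5) ∨ (v (i + 6) = v (i + 8) ∧ v (i + 7) = v (i + 1))) := by
  have hb := no_xyxy h1 h2 h3 h4 i ha
  have a0 := h1 i
  have a2 := h1 (i + 2)
  have a3 := h1 (i + 3)
  have a4 := h1 (i + 4)
  have a5 := h1 (i + 5)
  have a6 := h1 (i + 6)
  have a7 := h1 (i + 7)
  have b0 := h2 i ha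
  have b4 := h2 (i + 4)
  have c0 := h3 i ha
  have d0 := h4 i ha
  simp only [add_assoc, Nat.reduceAdd] at *
  have e4 : v (i + 4) = v (i + 1) := by grind
  refine ⟨e4, ?_⟩
  by_cases hc : v (i + 3) = v (i + 5)
  · exact Or.inl hc
  · right
    have e5 : v i = v (i + 5) := by grind
    have f7 := c0 e5
    have f8 := d0 e5
    have e6 : v (i + 6) ≠ v (i + 4) := by grind
    constructor <;> grind

lemma middle
    (h1 : ∀ i, v i ≠ v (i + 1))
    (h2 : ∀ i, v i = v (i + 2) → v i ≠ v (i + 4))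
    (h3 : ∀ i, v i = v (i + 2) → v i = v (i + 5) → v i ≠ v (i + 7))
    (h4 : ∀ i, v i = v (i + 2) → v i = v (i + 5) → v i ≠ v (i + 8))
    (i : ℕ) (ha : v i = v (i + 2)) (j : ℕ) : v (i + 3 * j + 1) = v (i + 1) := by
  have S : ∀ j, (v (i + 3 * j) = v (i + 3 * j + 2) ∧ v (i + 3 * j + 1) = v (i + 1)) ∨
      (v (i + 3 * j + 3) = v (i + 3 * j + 5) ∧ v (i + 3 * j + 1) = v (i + 1) ∧
        v (i + 3 * j + 4) = v (i + 1)) := by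
    intro j
    induction j with
    | zero => exact Or.inl ⟨ha, rfl⟩
    | succ j ih =>
      have e : i + 3 * (j + 1) = i + 3 * j + 3 := by ring
      rw [e]
      simp only [add_assoc, Nat.reduceAdd] at *
      rcases ih with ⟨h, h'⟩ | ⟨h, h', h''⟩
      · have hs := flip_step h1 h2 h3 h4 (i + 3 * j) (by simpa only [add_assoc] using h)
        simp only [add_assoc] at hs
        obtain ⟨g1, g2 | ⟨g2, g3⟩⟩ := hs
        · exact Or.inl ⟨g2, g1.trans h'⟩
        · exact Or.inr ⟨g2, g1.trans h', g3.trans h'⟩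
      · exact Or.inl ⟨h, h''⟩
  rcases S j with ⟨_, h⟩ | ⟨_, h, _⟩ <;> exact h

end structureLemmas


lemma prefix_zero {x a : ℕ → ℕ} (h : seqLT x a) (j : ℕ) (hj : ∀ i < j, x i = a i)
    (ha : a j = 0) : x j = 0 := by
  by_contra hc
  exact seqLT_asymm h ⟨j, fun i hi => (hj i hi).symm, by omega⟩

lemma ind_eq_one {k : Fin 3} {w : ℕ → Fin 3} {i : ℕ} (h : w i = k) : ind k w i = 1 := by
  simp [ind, h]

lemma ind_eq_zero {k : Fin 3} {w : ℕ → Fin 3} {i : ℕ} (h : w i ≠ k) : ind k w i = 0 := by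
  simp [ind, h]

lemma ne_of_ind {k : Fin 3} {w : ℕ → Fin 3} {i : ℕ} (h : ind k w i = 0) : w i ≠ k := by
  intro h'; simp [ind, h'] at h

/-- The lower bound for words. -/
theorem lower (m : ℕ) (hm : 1 ≤ m) (n : ℕ) (w : ℕ → Fin 3)
    (hper : SmallestPeriod w (3 * (2 * m + 1) * 2 ^ n))
    (H : ∀ i k, w i ≠ k → seqLT (sh (i + 1) (ind k w)) (aS m n)) : False := by
  obtain ⟨hP0, hP, hmin⟩ := hper
  obtain ⟨a0, a1, a2, a3, a4, a5, a6, a7, a8⟩ := aS_prefix m hm n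
  have h2n : 1 ≤ 2 ^ n := Nat.one_le_two_pow
  have hP3 : 3 * 2 ^ n < 3 * (2 * m + 1) * 2 ^ n := by
    have : 3 * (2 * m + 1) * 2 ^ n = 3 * 2 ^ n + 6 * m * 2 ^ n := by ring
    have : 0 < 6 * m * 2 ^ n := by positivity
    omega
  -- no immediate repetition
  have hback : ∀ i, w (i + 1) = w (i + 2) → w i = w (i + 1) := by
    intro i h
    by_contra hc
    have hlt := H i (w (i + 1)) hc
    have := prefix_zero hlt 1 (by
      intro j hj
      have : j = 0 := by omega
      subst this
      rw [a0]
      exact ind_eq_one rfl) a1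
    exact ne_of_ind this h.symm
  have n11 : ∀ i, w i ≠ w (i + 1) := by
    intro i hi
    have hall : ∀ j i, w (i + j) = w (i + j + 1) → w i = w (i + 1) := by
      intro j
      induction j with
      | zero => intro i h; exact h
      | succ j ih =>
        intro i h
        exact ih i (hback (i + j) h)
    obtain ⟨k, hk⟩ := hmin 1 one_pos (by omega)
    apply hk
    symm
    have hge : k ≤ k * (3 * (2 * m + 1) * 2 ^ n) := Nat.le_mul_of_pos_right _ hP0
    apply hall (i + k * (3 * (2 * m + 1) * 2 ^ n) - k) k
    have e : k + (i + k * (3 * (2 * m + 1) * 2 ^ n) - k) = i + k * (3 * (2 * m + 1) * 2 ^ n) := by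
      omega
    rw [e, periodic_mul hP, add_right_comm, periodic_mul hP]
    exact hi
  set v : ℕ → Fin 3 := sh 1 w with hv
  have hvP : ∀ i, v (i + 3 * (2 * m + 1) * 2 ^ n) = v i := by
    intro i
    simp only [hv, sh]
    rw [← add_assoc, hP]
  have Hv : ∀ i k, v i = k → seqLT (sh i (ind k v)) (aS m n) := by
    intro i k hk
    have h1 : w i ≠ k := by
      have := n11 i
      rw [← hk]
      simp only [hv, sh]
      rw [add_comm 1 i]; exact this
    have h2 := H i k h1
    have e : sh (i + 1) (ind k w) = sh i (ind k v) := by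
      funext j
      simp only [sh, ind, hv]
      rw [show 1 + (i + j) = i + 1 + j by ring]
    rwa [e] at h2
  have p1 : ∀ i, v i ≠ v (i + 1) := by
    intro i
    simp only [hv, sh]
    rw [← add_assoc]; exact n11 _
  have p2 : ∀ i, v i = v (i + 2) → v i ≠ v (i + 4) := by
    intro i h h'
    have hlt := Hv i _ rfl
    have q1 := p1 i
    have q3 := p1 (i + 2)
    refine ne_of_ind (prefix_zero hlt 4 ?_ a4) h'.symm
    intro j hj
    interval_cases j
    · rw [a0]; exact ind_eq_one rfl
    · rw [a1]; exact ind_eq_zero q1.symm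
    · rw [a2]; exact ind_eq_one h.symm
    · rw [a3]; exact ind_eq_zero (by rw [h]; exact q3.symm)
  have p5 : ∀ i, v i = v (i + 2) → v i = v (i + 5) → v (i + 7) ≠ v i ∧ v (i + 8) ≠ v i := by
    intro i h h'
    have hlt := Hv i _ rfl
    have q1 := p1 i
    have q3 := p1 (i + 2)
    have q4 := p2 i h
    have q6 := p1 (i + 5)
    have z : ∀ j < 7, sh i (ind (v i) v) j = aS m n j := by
      intro j hj
      interval_cases j
      · rw [a0]; exact ind_eq_one rfl
      · rw [a1]; exact ind_eq_zero q1.symm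
      · rw [a2]; exact ind_eq_one h.symm
      · rw [a3]; exact ind_eq_zero (by rw [h]; exact q3.symm)
      · rw [a4]; exact ind_eq_zero q4.symm
      · rw [a5]; exact ind_eq_one h'.symm
      · rw [a6]; exact ind_eq_zero (by rw [h']; exact q6.symm)
    have z7 := prefix_zero hlt 7 z a7
    have z8 := prefix_zero hlt 8 (by
      intro j hj
      rcases Nat.lt_or_ge j 7 with h | h
      · exact z j h
      · have : j = 7 := by omega
        subst this
        rw [z7, a7]) a8
    exact ⟨ne_of_ind z7, ne_of_ind z8⟩
  have p3 : ∀ i, v i = v (i + 2) → v i = v (i + 5) → v i ≠ v (i + 7) :=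
    fun i h h' => (p5 i h h').1.symm
  have p4 : ∀ i, v i = v (i + 2) → v i = v (i + 5) → v i ≠ v (i + 8) :=
    fun i h h' => (p5 i h h').2.symm
  -- there is a flip
  have hflip : ∃ i, v i = v (i + 2) := by
    by_contra hc
    push Not at hc
    have h3 : ∀ i, v (i + 3) = v i := by
      intro i
      have q1 := p1 i
      have q2 := p1 (i + 1)
      have q3 := p1 (i + 2)
      have r1 := hc i
      have r2 := hc (i + 1)
      exact third (v (i + 1)) (v (i + 2)) _ _ q2 r2.symm q3.symm q1 r1
    obtain ⟨k, hk⟩ := hmin 3 (by omega) (by omega)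
    apply hk
    have e := h3 (k + (3 * (2 * m + 1) * 2 ^ n - 1))
    simp only [hv, sh] at e
    rw [show 1 + (k + (3 * (2 * m + 1) * 2 ^ n - 1) + 3) = k + 3 + 3 * (2 * m + 1) * 2 ^ n by
      omega, show 1 + (k + (3 * (2 * m + 1) * 2 ^ n - 1)) = k + 3 * (2 * m + 1) * 2 ^ n by omega,
      hP, hP] at e
    exact e
  obtain ⟨i₀, hi₀⟩ := hflip
  set u : ℕ → Fin 3 := sh i₀ v with hu
  have hmid : ∀ j, u (3 * j + 1) = u 1 := by
    intro j
    simp only [hu, sh]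
    rw [← add_assoc]
    exact middle p1 p2 p3 p4 i₀ hi₀ j
  have u1 : ∀ i, u i ≠ u (i + 1) := fun i => p1 (i₀ + i)
  have uP : ∀ i, u (i + 3 * (2 * m + 1) * 2 ^ n) = u i := by
    intro i
    simp only [hu, sh]
    rw [← hvP (i₀ + i), add_assoc]
  have Hu : ∀ i k, u i = k → seqLT (sh i (ind k u)) (aS m n) := by
    intro i k hk
    have := Hv (i₀ + i) k hk
    have e : sh (i₀ + i) (ind k v) = sh i (ind k u) := by
      funext j
      simp only [sh, ind, hu, add_assoc]
    rwa [e] at this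
  have hn0 : ∀ j, u (3 * j) ≠ u 1 := fun j => by rw [← hmid j]; exact u1 _
  have hn2 : ∀ j, u (3 * j + 2) ≠ u 1 := fun j => by rw [← hmid j]; exact (u1 _).symm
  set X := u 0 with hX
  set Y := u 1 with hY
  have hXY : X ≠ Y := u1 0
  obtain ⟨Z, hZX, hZY⟩ : ∃ Z : Fin 3, Z ≠ X ∧ Z ≠ Y := by
    generalize X = x, Y = y
    revert x y; decide
  set E : ℕ → Bool := fun j => decide (u (3 * j) ≠ X) with hE
  have xz : ∀ c : Fin 3, c ≠ Y → c ≠ X → c = Z := fun c h h' =>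
    third X Y c Z hXY h' h hZX hZY
  have indX : ind X u = tri E := by
    funext i
    obtain ⟨j, rfl | rfl | rfl⟩ := three_cases i
    · rw [tri_zero]
      by_cases h : u (3 * j) = X <;> simp [ind, hE, h]
    · rw [tri_one]
      exact ind_eq_zero (by rw [hmid]; exact hXY.symm)
    · rw [tri_two]
      have h1 := u1 (3 * j + 2)
      have h2 := hn2 j
      have h3 := hn0 (j + 1)
      rw [show 3 * (j + 1) = 3 * j + 2 + 1 by ring] at h3
      by_cases h : u (3 * j + 2) = X
      · have h4 : u (3 * (j + 1)) ≠ X := by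
          rw [show 3 * (j + 1) = 3 * j + 2 + 1 by ring, ← h]; exact h1.symm
        simp [ind, hE, h, h4]
      · have h4 : u (3 * (j + 1)) = X := by
          rw [show 3 * (j + 1) = 3 * j + 2 + 1 by ring]
          by_contra h5
          exact h1 ((xz _ h2 h).trans (xz _ h3 h5).symm)
        simp [ind, hE, h, h4]
  have indZ : ind Z u = tri (fun j => !(E j)) := by
    have hsum : ∀ i, u i ≠ Y → ind Z u i = 1 - ind X u i := by
      intro i hi
      by_cases h : u i = X
      · rw [ind_eq_one h, ind_eq_zero (by rw [h]; exact hZX.symm)]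
      · rw [ind_eq_zero h, ind_eq_one (xz _ hi h)]
    funext i
    obtain ⟨j, rfl | rfl | rfl⟩ := three_cases i
    · rw [hsum _ (hn0 j), indX, tri_zero, tri_zero]
      cases E j <;> simp
    · rw [tri_one]
      exact ind_eq_zero (by rw [hmid]; exact hZY.symm)
    · rw [hsum _ (hn2 j), indX, tri_two, tri_two]
      cases E (j + 1) <;> simp
  have EP : ∀ i, E (i + (2 * m + 1) * 2 ^ n) = E i := by
    intro i
    simp only [hE]
    rw [mul_add, ← mul_assoc, ← uP (3 * i)]
  have hX' : ∀ i j, ind X u i = ind X u j → ind Z u i = ind Z u j → u i = u j := by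
    intro i j h h'
    by_cases h1 : u i = X
    · rw [ind_eq_one h1] at h
      by_contra h2
      rw [ind_eq_zero (by rw [h1] at h2; exact fun h3 => h2 h3.symm)] at h
      omega
    · by_cases h2 : u i = Z
      · rw [ind_eq_one h2] at h'
        by_contra h3
        rw [ind_eq_zero (by rw [h2] at h3; exact fun h4 => h3 h4.symm)] at h'
        omega
      · rw [ind_eq_zero h1] at h
        rw [ind_eq_zero h2] at h'
        exact third X Z _ _ hZX.symm h1 h2 (ne_of_ind h.symm) (ne_of_ind h'.symm)
  have EnP : ¬ ∀ i, E (i + 2 ^ n) = E i := by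
    intro hc
    have tper : ∀ F : ℕ → Bool, (∀ i, F (i + 2 ^ n) = F i) →
        ∀ i, tri F (i + 3 * 2 ^ n) = tri F i := by
      intro F hF i
      have h := sh_tri F (2 ^ n)
      have e : sh (2 ^ n) F = F := by
        funext j
        simp only [sh]
        rw [add_comm, hF]
      rw [e] at h
      rw [add_comm]
      exact congrFun h i
    have uper : ∀ i, u (i + 3 * 2 ^ n) = u i := by
      intro i
      apply hX'
      · rw [indX]; exact tper E hc i
      · rw [indZ]; exact tper _ (fun i => by rw [hc]) i
    obtain ⟨k, hk⟩ := hmin (3 * 2 ^ n) (by omega) hP3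
    apply hk
    set Q := 3 * (2 * m + 1) * 2 ^ n with hQ
    have hge : i₀ + 1 ≤ (i₀ + 1) * Q := Nat.le_mul_of_pos_right _ hP0
    have e := uper (k + ((i₀ + 1) * Q - (i₀ + 1)))
    simp only [hu, hv, sh] at e
    rw [show 1 + (i₀ + (k + ((i₀ + 1) * Q - (i₀ + 1)) + 3 * 2 ^ n)) =
        k + 3 * 2 ^ n + (i₀ + 1) * Q by omega,
      show 1 + (i₀ + (k + ((i₀ + 1) * Q - (i₀ + 1)))) = k + (i₀ + 1) * Q by omega,
      periodic_mul hP, periodic_mul hP] at e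
    exact e
  obtain ⟨i, hi⟩ := core m hm n E EP EnP
  have A0 := (AE_prefix m hm n).1
  have fin : ∀ (F : ℕ → Bool) (c : Fin 3), ind c u = tri F → F i = false →
      nrm i E = sh i F → False := by
    intro F c hc hF hn
    have huc : u (3 * i) = c := by
      by_contra h
      have := ind_eq_zero h
      rw [hc, tri_zero, hF] at this
      simp at this
    have hlt := Hu (3 * i) c huc
    rw [hc, sh_tri] at hlt
    rw [hn] at hi
    have hle : seqLE (aS m n) (tri (sh i F)) := tri_monoLE (by simp [A0, sh, hF]) hi
    rcases hle with h | h
    · exact seqLT_asymm h hlt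
    · rw [← h] at hlt; exact seqLT_irrefl _ hlt
  rcases hEi : E i with _ | _
  · refine fin E X indX hEi ?_
    funext j
    simp [nrm, sh, hEi]
  · refine fin _ Z indZ (by simp [hEi]) ?_
    funext j
    simp [nrm, sh, hEi]


/-! ### The univoque set -/

/-- The digits attached to the letters. -/
def pts : Fin 3 → ℝ × ℝ := ![(0, 0), (1, 0), (0, 1)]

lemma pts_mem (k : Fin 3) : pts k ∈ OmegaR := by
  fin_cases k <;> simp [pts, OmegaR]

lemma mem_OmegaR {p : ℝ × ℝ} (h : p ∈ OmegaR) : ∃ k, p = pts k := by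
  rcases h with h | h | h
  · exact ⟨0, h⟩
  · exact ⟨1, h⟩
  · exact ⟨2, h⟩

lemma pts_inj : Function.Injective pts := by
  intro a b h
  fin_cases a <;> fin_cases b <;> simp [pts] at h ⊢

/-- The barycentric coordinates. -/
def co (β : ℝ) (k : Fin 3) (y : ℝ × ℝ) : ℝ :=
  ![1 / (β - 1) - y.1 - y.2, y.1, y.2] k

/-- The point coded by a word. -/
def pt (β : ℝ) (w : ℕ → Fin 3) : ℝ × ℝ := ∑' i : ℕ, (β ^ (i + 1))⁻¹ • pts (w i)

lemma pts_fst (w : ℕ → Fin 3) (i : ℕ) : (pts (w i)).1 = (ind 1 w i : ℝ) := by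
  simp only [ind]
  generalize w i = k
  fin_cases k <;> simp [pts]

lemma pts_snd (w : ℕ → Fin 3) (i : ℕ) : (pts (w i)).2 = (ind 2 w i : ℝ) := by
  simp only [ind]
  generalize w i = k
  fin_cases k <;> simp [pts]

lemma pts_zero (w : ℕ → Fin 3) (i : ℕ) : (ind 0 w i : ℝ) = 1 - ind 1 w i - ind 2 w i := by
  simp only [ind]
  generalize w i = k
  fin_cases k <;> simp

lemma pt_hasSum {β : ℝ} (hβ : 1 < β) (w : ℕ → Fin 3) :
    HasSum (fun i : ℕ => (β ^ (i + 1))⁻¹ • pts (w i)) (val β (ind 1 w), val β (ind 2 w)) := by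
  have h1 := (val_summable hβ (ind_binary 1 w)).hasSum
  have h2 := (val_summable hβ (ind_binary 2 w)).hasSum
  have h := h1.prodMk h2
  convert h using 1
  · funext i
    ext
    · simp [pts_fst, div_eq_inv_mul]
    · simp [pts_snd, div_eq_inv_mul]
  · rfl

lemma pt_eq {β : ℝ} (hβ : 1 < β) (w : ℕ → Fin 3) :
    pt β w = (val β (ind 1 w), val β (ind 2 w)) := (pt_hasSum hβ w).tsum_eq

lemma co_pt {β : ℝ} (hβ : 1 < β) (w : ℕ → Fin 3) (k : Fin 3) :
    co β k (pt β w) = val β (ind k w) := by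
  rw [pt_eq hβ]
  fin_cases k
  · simp only [co]
    have h : val β (ind 0 w) + val β (ind 1 w) + val β (ind 2 w) = 1 / (β - 1) := by
      rw [← geom_sum hβ]
      unfold val
      rw [← (val_summable hβ (ind_binary 0 w)).tsum_add (val_summable hβ (ind_binary 1 w)),
        ← ((val_summable hβ (ind_binary 0 w)).add
          (val_summable hβ (ind_binary 1 w))).tsum_add (val_summable hβ (ind_binary 2 w))]
      apply tsum_congr
      intro i
      rw [pts_zero]
      ring
    simp
    rw [one_div] at h
    linarith
  · simp [co]
  · simp [co]

lemma Sfat_eq (β : ℝ) : Sfat β = Set.range (pt β) := by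
  ext x
  constructor
  · rintro ⟨d, hd, rfl⟩
    choose w hw using fun i => mem_OmegaR (hd i)
    exact ⟨w, by simp only [pt, hw]⟩
  · rintro ⟨w, rfl⟩
    exact ⟨fun i => pts (w i), fun i => pts_mem _, rfl⟩

lemma co_comb (β : ℝ) (k : Fin 3) (x y : ℝ × ℝ) {a b : ℝ} (hab : a + b = 1) :
    co β k (a • x + b • y) = a * co β k x + b * co β k y := by
  fin_cases k
  · simp [co]
    linear_combination (-(β - 1)⁻¹) * hab
  · simp [co]
  · simp [co]

lemma Delta_eq {β : ℝ} (hβ : 1 < β) : Delta β = {y | ∀ k, 0 ≤ co β k y} := by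
  apply Set.Subset.antisymm
  · apply convexHull_min
    · rw [Sfat_eq]
      rintro _ ⟨w, rfl⟩ k
      rw [co_pt hβ]
      exact val_nonneg hβ _
    · intro x hx y hy a b ha hb hab k
      rw [co_comb β k x y hab]
      have := hx k
      have := hy k
      positivity
  · intro y hy
    have hv : ∀ k : Fin 3, pt β (fun _ => k) ∈ Delta β := by
      intro k
      apply subset_convexHull
      rw [Sfat_eq]
      exact ⟨_, rfl⟩
    have hpos : 0 < β - 1 := by linarith
    have hval : ∀ k l : Fin 3, val β (ind k (fun _ => l)) = if l = k then 1 / (β - 1) else 0 := by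
      intro k l
      split_ifs with h
      · rw [← geom_sum hβ]; simp [val, ind, h]
      · simp [val, ind, h]
    have hc : Convex ℝ (Delta β) := convex_convexHull ℝ _
    have h0 := hy 0
    have h1 := hy 1
    have h2 := hy 2
    have hsum := hc.sum_mem (t := Finset.univ) (w := fun k : Fin 3 => (β - 1) * co β k y)
      (z := fun k => pt β (fun _ => k)) (fun k _ => mul_nonneg hpos.le (hy k)) (by
        simp [Fin.sum_univ_three, co]
        field_simp
        ring) (fun k _ => hv k)
    convert hsum using 1
    simp only [Fin.sum_univ_three, pt_eq hβ, hval]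
    ext
    · simp [co]
      field_simp
    · simp [co]
      field_simp

lemma co_fmap {β : ℝ} (hβ : 1 < β) (k l : Fin 3) (y : ℝ × ℝ) :
    co β k (fmap β (pts l) y) = β⁻¹ * (co β k y + if l = k then 1 else 0) := by
  have h1 : β - 1 ≠ 0 := by linarith
  have h2 : β ≠ 0 := by linarith
  fin_cases k <;> fin_cases l <;> simp [co, fmap, pts] <;> field_simp <;> ring

lemma fmap_image {β : ℝ} (hβ : 1 < β) (l : Fin 3) (x : ℝ × ℝ) :
    x ∈ fmap β (pts l) '' Delta β ↔ ∀ k, (if l = k then 1 else 0) ≤ β * co β k x := by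
  have h2 : β ≠ 0 := by linarith
  constructor
  · rintro ⟨y, hy, rfl⟩ k
    rw [co_fmap hβ, mul_inv_cancel_left₀ h2]
    rw [Delta_eq hβ] at hy
    have := hy k
    linarith
  · intro h
    have e : fmap β (pts l) (β • x - pts l) = x := by
      simp [fmap, smul_smul, h2]
    refine ⟨β • x - pts l, ?_, e⟩
    rw [Delta_eq hβ]
    intro k
    have h3 := co_fmap hβ k l (β • x - pts l)
    rw [e] at h3
    have h4 := h k
    rw [h3, mul_inv_cancel_left₀ h2] at h4
    linarith

lemma pt_mem_Ofat {β : ℝ} (hβ : 1 < β) (w : ℕ → Fin 3) :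
    pt β w ∈ Ofat β ↔ ∃ k, w 0 ≠ k ∧ 1 ≤ val β (sh 1 (ind k w)) := by
  have hpos : 0 < β := by linarith
  have hco : ∀ k, β * co β k (pt β w) = ind k w 0 + val β (sh 1 (ind k w)) := by
    intro k
    rw [co_pt hβ, val_succ hβ (ind_binary k w), mul_inv_cancel_left₀ hpos.ne']
  have hnn : ∀ k, 0 ≤ val β (sh 1 (ind k w)) := fun k => val_nonneg hβ _
  constructor
  · intro h
    simp only [Ofat, Set.mem_iUnion] at h
    obtain ⟨c, hc, d, hd, hcd, h1, h2⟩ := h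
    obtain ⟨k, rfl⟩ := mem_OmegaR hc
    obtain ⟨l, rfl⟩ := mem_OmegaR hd
    have hkl : k ≠ l := fun h => hcd (by rw [h])
    have key : ∀ k, pt β w ∈ fmap β (pts k) '' Delta β → w 0 ≠ k →
        1 ≤ val β (sh 1 (ind k w)) := by
      intro k hk h0
      have := (fmap_image hβ k _).mp hk k
      rw [hco, ind_eq_zero h0] at this
      simpa using this
    by_cases h0 : w 0 = k
    · have : w 0 ≠ l := by rw [h0]; exact hkl
      exact ⟨l, this, key l h2 this⟩
    · exact ⟨k, h0, key k h1 h0⟩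
  · rintro ⟨k, h0, hk⟩
    simp only [Ofat, Set.mem_iUnion]
    refine ⟨pts (w 0), pts_mem _, pts k, pts_mem _, fun h => h0 (pts_inj h), ?_, ?_⟩
    · rw [fmap_image hβ]
      intro j
      rw [hco]
      have := hnn j
      by_cases h : w 0 = j
      · rw [ind_eq_one h, if_pos h]; push_cast; linarith
      · rw [ind_eq_zero h, if_neg h]; push_cast; linarith
    · rw [fmap_image hβ]
      intro j
      rw [hco]
      have := hnn j
      have h3 : (0 : ℝ) ≤ ind j w 0 := by positivity
      split_ifs with h
      · subst h; linarith
      · linarith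

lemma mem_Ufat {β : ℝ} (hβ : 1 < β) (w : ℕ → Fin 3) :
    (fun i => pts (w i)) ∈ Ufat β ↔
      ∀ n k, w n ≠ k → val β (sh (n + 1) (ind k w)) < 1 := by
  have e : ∀ n, (∑' i : ℕ, (β ^ (i + 1))⁻¹ • pts (w (n + i))) = pt β (sh n w) := fun n => rfl
  have e2 : ∀ n k, sh 1 (ind k (sh n w)) = sh (n + 1) (ind k w) := by
    intro n k
    funext i
    show ind k w (n + (1 + i)) = ind k w (n + 1 + i)
    rw [add_assoc]
  constructor
  · rintro ⟨-, h⟩ n k hk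
    have := h n
    rw [e, pt_mem_Ofat hβ] at this
    by_contra hc
    push Not at hc
    exact this ⟨k, hk, by rw [e2]; exact hc⟩
  · intro h
    refine ⟨fun i => pts_mem _, fun n => ?_⟩
    rw [e, pt_mem_Ofat hβ]
    rintro ⟨k, hk, h1⟩
    rw [e2] at h1
    have := h n k hk
    linarith

lemma smallest_pts (w : ℕ → Fin 3) (k : ℕ) :
    SmallestPeriod (fun i => pts (w i)) k ↔ SmallestPeriod w k := by
  simp only [SmallestPeriod, pts_inj.eq_iff, ne_eq]

/-- The exact value of `betaK`. -/
theorem betaK_eq (m : ℕ) (hm : 1 ≤ m) (n : ℕ) {β₀ : ℝ} (h1 : 1 < β₀) (h2 : β₀ ≤ 2)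
    (hval : val β₀ (aS m n) = 1) : betaK (3 * (2 * m + 1) * 2 ^ n) = β₀ := by
  have hab : IsBinary (aS m n) := tri_binary _
  set S := {β : ℝ | β ∈ Set.Ioc (1 : ℝ) 2 ∧
    ∃ d ∈ Ufat β, SmallestPeriod d (3 * (2 * m + 1) * 2 ^ n)} with hS
  have hlow : ∀ β ∈ S, β₀ ≤ β := by
    rintro β ⟨hβ, d, hd, hper⟩
    by_contra hlt
    push Not at hlt
    choose w hw using fun i => mem_OmegaR (hd.1 i)
    have hdw : d = fun i => pts (w i) := funext hw
    rw [hdw, mem_Ufat hβ.1] at hd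
    rw [hdw, smallest_pts] at hper
    refine lower m hm n w hper ?_
    intro i k hk
    exact seqLT_of_val_lt_one hβ.1 hlt hab ((ind_binary k w).sh _) hval (aS_shift m hm n)
      (hd i k hk)
  have hup : ∀ β, β₀ < β → β ≤ 2 → β ∈ S := by
    intro β hβ hβ2
    have hβ1 : 1 < β := h1.trans hβ
    refine ⟨⟨hβ1, hβ2⟩, fun i => pts (word m n i), ?_, (smallest_pts _ _).mpr
      (word_smallest m hm n)⟩
    rw [mem_Ufat hβ1]
    intro i k _
    have hle := val_le_one_of_shifts h1 hab (ind_binary k (word m n)) hval.le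
      (word_shift m hm n k) (i + 1)
    by_cases hz : ∃ j, sh (i + 1) (ind k (word m n)) j ≠ 0
    · obtain ⟨j, hj⟩ := hz
      have := val_strict h1 hβ ((ind_binary k (word m n)).sh (i + 1)) j hj
      linarith
    · push Not at hz
      simp [val, hz]
  have hlt2 : β₀ < 2 := by
    rcases lt_or_eq_of_le h2 with h | h
    · exact h
    · exfalso
      subst h
      have h3 := hval
      have hp := aS_prefix m hm n
      rw [val_succ h1 hab, val_succ h1 (hab.sh 1)] at h3
      have h4 := val_le h1 ((hab.sh 1).sh 1)
      have h5 : (sh 1 (aS m n)) 0 = 0 := hp.2.1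
      rw [h5, hp.1] at h3
      norm_num at h3 h4
      linarith
  have hbdd : BddBelow S := ⟨β₀, hlow⟩
  apply le_antisymm
  · apply le_of_forall_gt_imp_ge_of_dense
    intro β hβ
    have h3 : min β 2 ∈ S := hup _ (lt_min hβ hlt2) (min_le_right _ _)
    exact (csInf_le hbdd h3).trans (min_le_left _ _)
  · exact le_csInf ⟨2, hup 2 hlt2 le_rfl⟩ hlow


/-! ### The limit sequence -/

/-- The Thue-Morse sequence. -/
def tm (i : ℕ) : Bool :=
  if h : i = 0 then false else xor (tm (i / 2)) (decide (i % 2 = 1))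
termination_by i
decreasing_by omega

lemma tm_zero : tm 0 = false := by
  rw [tm]; simp

lemma tm_eq (i : ℕ) : tm i = xor (tm (i / 2)) (decide (i % 2 = 1)) := by
  by_cases h : i = 0
  · subst h; simp [tm_zero]
  · rw [tm, dif_neg h]

lemma tm_pow_add (n : ℕ) : ∀ i, i < 2 ^ n → tm (2 ^ n + i) = !(tm i) := by
  induction n with
  | zero =>
    intro i hi
    have : i = 0 := by simpa using hi
    subst this
    rw [tm_eq]; simp [tm_zero]
  | succ n ih =>
    intro i hi
    rw [pow_succ] at hi ⊢
    rw [tm_eq, tm_eq i]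
    have h1 : (2 ^ n * 2 + i) / 2 = 2 ^ n + i / 2 := by omega
    have h2 : (2 ^ n * 2 + i) % 2 = i % 2 := by omega
    rw [h1, h2, ih _ (by omega)]
    simp

lemma tm_pow (n : ℕ) : tm (2 ^ n) = true := by
  have := tm_pow_add n 0 (by positivity)
  simpa [tm_zero] using this

lemma hatE_eq (n : ℕ) : ∀ i, hatE n i =
    if i < 2 ^ (n + 1) then tm i else !(tm (i % 2 ^ (n + 1))) := by
  have t1 : tm 1 = true := tm_pow 0
  induction n with
  | zero =>
    intro i
    simp only [hatE, hat0]
    rcases Nat.lt_or_ge i 2 with h | h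
    · interval_cases i <;> simp [tm_zero, t1]
    · have : ¬ i < 2 ^ (0 + 1) := by simp; omega
      rw [if_neg this]
      simp only [zero_add, pow_one]
      rcases Nat.mod_two_eq_zero_or_one i with h2 | h2
      · simp [h2, tm_zero, h]
      · simp [h2, t1]; omega
  | succ n ih =>
    intro i
    simp only [hatE, sub]
    rw [ih]
    have e1 : i / 2 < 2 ^ (n + 1) ↔ i < 2 ^ (n + 1 + 1) := by
      rw [pow_succ 2 (n + 1)]; omega
    by_cases h : i < 2 ^ (n + 1 + 1)
    · rw [if_pos h, if_pos (e1.mpr h), ← tm_eq]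
    · rw [if_neg h, if_neg (fun h' => h (e1.mp h'))]
      rw [tm_eq (i % 2 ^ (n + 1 + 1)), pow_succ' 2 (n + 1), Nat.mod_mul_right_div_self,
        Nat.mod_mul_right_mod]
      simp

lemma plus_length {w : List ℕ} (h : w ≠ []) : (plusBlock w).length = w.length := by
  have := List.length_pos_iff.mpr h
  simp [plusBlock]; omega

lemma theta_length (w : List ℕ) : (thetaBlock w).length = w.length := by
  simp [thetaBlock]

lemma theta_getD (w : List ℕ) (j : ℕ) (hj : j < w.length) :
    (thetaBlock w).getD j 0 = if j % 3 = 1 then w.getD j 0 else 1 - w.getD j 0 := by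
  simp [thetaBlock, List.getD_eq_getElem?_getD, hj]

lemma plus_getD (w : List ℕ) (j : ℕ) (hj : j < w.length) :
    (plusBlock w).getD j 0 = if j + 1 = w.length then 1 else w.getD j 0 := by
  split_ifs with h
  · have : j = w.dropLast.length := by simp; omega
    simp [plusBlock, List.getD_eq_getElem?_getD, this]
  · have : j < w.length - 1 := by omega
    simp [plusBlock, List.getD_eq_getElem?_getD, List.getElem?_append, this, hj]

lemma toNat_not (b : Bool) : (!b).toNat = 1 - b.toNat := by cases b <;> rfl

lemma tB_length (n : ℕ) : (tB n).length = 3 * 2 ^ n := by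
  induction n with
  | zero => rfl
  | succ n ih =>
    have h : tB n ≠ [] := by
      intro h; rw [h] at ih
      have : 0 < 2 ^ n := by positivity
      simp at ih
    simp only [tB, List.length_append, theta_length, plus_length h, ih]
    ring

lemma tB_ne (n : ℕ) : tB n ≠ [] := by
  intro h
  have := tB_length n
  rw [h] at this
  simp at this

/-- The digits of `tB n`. -/
lemma tB_getD (n : ℕ) : ∀ j, j < 3 * 2 ^ n →
    (tB n).getD j 0 = if j + 1 = 3 * 2 ^ n then 0 else tri tm j := by
  have t1 : tm 1 = true := tm_pow 0
  induction n with
  | zero =>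
    intro j hj
    simp at hj
    interval_cases j <;> simp [tB, tri, tm_zero]
  | succ n ih =>
    have hplus : ∀ j, j < 3 * 2 ^ n → (plusBlock (tB n)).getD j 0 = tri tm j := by
      intro j hj
      have hp : 0 < 2 ^ n := by positivity
      rw [plus_getD _ _ (by rw [tB_length]; exact hj), tB_length, ih j hj]
      split_ifs with h
      · obtain ⟨k, hk⟩ : ∃ k, 2 ^ n = k + 1 := ⟨2 ^ n - 1, by omega⟩
        have : j = 3 * k + 2 := by omega
        rw [this, tri_two, ← hk, tm_pow]; rfl
      · rfl
    have hlen : (plusBlock (tB n)).length = 3 * 2 ^ n := by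
      rw [plus_length (tB_ne n), tB_length]
    intro j hj
    rw [pow_succ] at hj ⊢
    simp only [tB]
    rcases Nat.lt_or_ge j (3 * 2 ^ n) with h | h
    · rw [List.getD_append _ _ _ _ (by rw [hlen]; exact h), hplus j h, if_neg (by omega)]
    · rw [List.getD_append_right _ _ _ _ (by rw [hlen]; exact h), hlen]
      obtain ⟨i, rfl⟩ := Nat.exists_eq_add_of_le h
      rw [Nat.add_sub_cancel_left]
      have hi : i < 3 * 2 ^ n := by omega
      rw [theta_getD _ _ (by rw [hlen]; exact hi), hplus i hi]
      obtain ⟨k, rfl | rfl | rfl⟩ := three_cases i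
      · rw [if_neg (by omega), if_neg (by omega), ← mul_add, tri_zero, tri_zero,
          tm_pow_add n k (by omega), toNat_not, toNat_not, toNat_not]
      · rw [if_pos (by omega), if_neg (by omega), ← add_assoc, ← mul_add, tri_one, tri_one]
      · rw [if_neg (by omega), ← add_assoc (3 * 2 ^ n), ← mul_add, tri_two, tri_two]
        split_ifs with h2
        · have : k + 1 = 2 ^ n := by omega
          rw [this, tm_pow]; rfl
        · rw [add_assoc, tm_pow_add n (k + 1) (by omega), toNat_not]

lemma hatSeq_eq (n : ℕ) : hatSeq n = tri (hatE n) := by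
  funext i
  have hp : 0 < 2 ^ (n + 1) := by positivity
  have hlen : (plusBlock (tB (n + 1))).length = 3 * 2 ^ (n + 1) := by
    rw [plus_length (tB_ne _), tB_length]
  have hE := hatE_eq n
  have htB := tB_getD (n + 1)
  have htl := tB_length (n + 1)
  have htp := tm_pow (n + 1)
  simp only [hatSeq, prefixPeriodic, hlen, theta_length, htl]
  generalize 2 ^ (n + 1) = P at *
  rcases Nat.lt_or_ge i (3 * P) with h | h
  · rw [if_pos h, plus_getD _ _ (by rw [htl]; exact h), htB i h, htl]
    obtain ⟨k, rfl | rfl | rfl⟩ := three_cases i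
    · rw [if_neg (by omega), if_neg (by omega), tri_zero, tri_zero, hE, if_pos (by omega)]
    · rw [if_neg (by omega), if_neg (by omega), tri_one, tri_one]
    · rw [tri_two, tri_two, hE]
      split_ifs with h1 h2 h2
      · omega
      · have : k + 1 = P := by omega
        rw [this, Nat.mod_self, tm_zero]; rfl
      · rfl
      · omega
  · rw [if_neg (by omega)]
    have hmod : (i - 3 * P) % (3 * P) = i % (3 * P) := by
      rw [← Nat.mod_eq_sub_mod h]
    have hlt : i % (3 * P) < 3 * P := Nat.mod_lt _ (by omega)
    rw [hmod, theta_getD _ _ (by rw [htl]; exact hlt), htB _ hlt]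
    obtain ⟨k, rfl | rfl | rfl⟩ := three_cases i
    · rw [Nat.mul_mod_mul_left]
      have hk := Nat.mod_lt k hp
      rw [if_neg (by omega), if_neg (by omega), tri_zero, tri_zero, hE, if_neg (by omega)]
      rw [toNat_not, toNat_not, toNat_not]
    · have e : (3 * k + 1) % (3 * P) = 3 * (k % P) + 1 := by
        have hk := Nat.mod_lt k hp
        rw [Nat.add_mod, Nat.mul_mod_mul_left, Nat.mod_eq_of_lt (a := 1) (by omega),
          Nat.mod_eq_of_lt (by omega)]
      rw [e, if_pos (by omega), if_neg (by omega), tri_one, tri_one]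
    · have hk := Nat.mod_lt k hp
      have e : (3 * k + 2) % (3 * P) = 3 * (k % P) + 2 := by
        rw [Nat.add_mod, Nat.mul_mod_mul_left, Nat.mod_eq_of_lt (a := 2) (by omega),
          Nat.mod_eq_of_lt (by omega)]
      rw [e, if_neg (by omega), tri_two, tri_two, hE, if_neg (show ¬ k + 1 < P by omega)]
      split_ifs with h2
      · have : (k + 1) % P = 0 := by
          rw [← Nat.mod_add_mod, show k % P + 1 = P by omega, Nat.mod_self]
        rw [this, tm_zero]; rfl
      · have : (k + 1) % P = k % P + 1 := by
          rw [← Nat.mod_add_mod, Nat.mod_eq_of_lt (by omega)]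
        rw [this, toNat_not]

lemma AE_tendsto (n : ℕ) : ∀ i, ∀ᶠ m in atTop, AE m n i = hatE n i := by
  induction n with
  | zero =>
    intro i
    filter_upwards [eventually_ge_atTop i] with m hm
    simp only [AE, hatE]
    rw [Nat.mod_eq_of_lt (by omega)]
  | succ n ih =>
    intro i
    filter_upwards [ih (i / 2)] with m hm
    simp only [AE, hatE, sub, hm]

lemma aS_tendsto (n i : ℕ) : ∀ᶠ m in atTop, aS m n i = tri (hatE n) i := by
  filter_upwards [AE_tendsto n (i / 3), AE_tendsto n (i / 3 + 1)] with m h1 h2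
  simp only [aS, tri, h1, h2]

/-- The main assembly. -/
lemma main_aux (n : ℕ) (b : ℝ) (hb : 1 < b) (hval : val b (tri (hatE n)) = 1) :
    StrictAnti (fun m : ℕ => betaK (3 * (2 * (m + 1) + 1) * 2 ^ n)) ∧
    Tendsto (fun m : ℕ => betaK (3 * (2 * (m + 1) + 1) * 2 ^ n)) atTop (nhds b) := by
  have hex : ∀ m : ℕ, ∃ β ∈ Set.Icc (1.4 : ℝ) 2, val β (aS (m + 1) n) = 1 := by
    intro m
    have hp := aS_prefix (m + 1) (by omega) n
    exact exists_base (tri_binary _) hp.1 hp.2.2.1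
  choose β hβ hv using hex
  have h1 : ∀ m, 1 < β m := fun m => by
    have := (hβ m).1
    norm_num at this
    linarith
  have e : (fun m : ℕ => betaK (3 * (2 * (m + 1) + 1) * 2 ^ n)) = β := by
    funext m
    exact betaK_eq (m + 1) (by omega) n (h1 m) (hβ m).2 (hv m)
  rw [e]
  have hanti : StrictAnti β := by
    apply strictAnti_nat_of_succ_lt
    intro m
    refine base_lt (h1 _) (h1 _) (tri_binary _) (tri_binary _) (hv (m + 1)) (hv m)
      (aS_shift _ (by omega) n) (aS_notEnd _ (by omega) n) ?_
    refine tri_mono ?_ (AE_anti (m + 1) (by omega) n)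
    rw [(AE_prefix _ (by omega) n).1, (AE_prefix _ (by omega) n).1]
  refine ⟨hanti, ?_⟩
  have hbdd : BddBelow (Set.range β) := ⟨1.4, by rintro _ ⟨m, rfl⟩; exact (hβ m).1⟩
  have hL := tendsto_atTop_ciInf hanti.antitone hbdd
  set L := ⨅ m, β m with hLdef
  have hL1 : (1.4 : ℝ) ≤ L := le_ciInf fun m => (hβ m).1
  have hL1' : 1 < L := by norm_num at hL1; linarith
  have hconv : Tendsto (fun m => val (β m) (aS (m + 1) n)) atTop (nhds (val L (tri (hatE n)))) := by
    unfold val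
    apply tendsto_tsum_of_dominated_convergence (bound := fun i : ℕ => 1 / (1.4 : ℝ) ^ (i + 1))
    · exact geom_summable (by norm_num)
    · intro i
      have h2 : ∀ᶠ m in atTop, aS (m + 1) n i = tri (hatE n) i :=
        (tendsto_add_atTop_nat 1).eventually (aS_tendsto n i)
      have h3 : Tendsto (fun m => (tri (hatE n) i : ℝ) / β m ^ (i + 1)) atTop
          (nhds ((tri (hatE n) i : ℝ) / L ^ (i + 1))) := by
        apply Tendsto.div tendsto_const_nhds (hL.pow _)
        positivity
      refine h3.congr' ?_
      filter_upwards [h2] with m hm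
      rw [hm]
    · refine Eventually.of_forall fun m i => ?_
      have h4 := term_le (h1 m) (tri_binary (AE (m + 1) n)) i
      have h5 := (hβ m).1
      have h6 : 0 < β m := by linarith [h1 m]
      rw [Real.norm_of_nonneg (by positivity)]
      refine h4.trans ?_
      gcongr
  have hval2 : val L (tri (hatE n)) = 1 := by
    refine tendsto_nhds_unique hconv ?_
    simp only [hv]
    exact tendsto_const_nhds
  rw [← val_uniq hL1' hb (tri_binary _) hval2 hval]
  exact hL


/-- For fixed n ≥ 0, the sequence m ↦ β_{3(2m+1)2ⁿ} (m ≥ 1) is strictly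
decreasing and converges to the base β̂_n ∈ (1,2] whose quasi-greedy
expansion of 1 is t_{n+2}⁺ (Θ(t_{n+2}))^∞. -/
theorem stmt7 (n : ℕ) (b : ℝ) (hb : b ∈ Set.Ioc (1 : ℝ) 2)
    (hqg : FatSierpinski.IsQuasiGreedy b (FatSierpinski.hatSeq n)) :
    StrictAntiOn (fun m : ℕ => FatSierpinski.betaK (3 * (2 * m + 1) * 2 ^ n))
      (Set.Ici 1) ∧
    Filter.Tendsto (fun m : ℕ => FatSierpinski.betaK (3 * (2 * m + 1) * 2 ^ n))
      Filter.atTop (nhds b) := by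
  have hval : val b (tri (hatE n)) = 1 := by
    rw [← hatSeq_eq]
    exact hqg.2.2.1
  obtain ⟨h1, h2⟩ := main_aux n b hb.1 hval
  constructor
  · intro x hx y hy hxy
    obtain ⟨x', rfl⟩ := Nat.exists_eq_add_of_le' (Set.mem_Ici.mp hx)
    obtain ⟨y', rfl⟩ := Nat.exists_eq_add_of_le' (Set.mem_Ici.mp hy)
    exact h1 (show x' < y' by omega)
  · exact (tendsto_add_atTop_iff_nat 1).mp h2

end FatSierpinski
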